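/- arXiv:1410.0715 — 4 statements merged into one kernel-verified Lean document; each statement's English description precedes it below -/
import Mathlib

section
/- Let X be a Banach space, J ⊆ ℝ an open interval, and {F_t : X → X}_{t∈J} a family of continuous linear maps such that for every x ∈ X the map t ↦ F_t(x) is smooth (infinitely differentiable in the norm topology). If each F_t is bijective, then for every x ∈ X the map t ↦ F_t⁻¹(x) is also smooth. -/
open Filter Topology Set

/-- The pointwise derivative of a pointwise smooth family is again such a family. -/
lemma exists_pointwise_deriv {X : Type*} [NormedAddCommGroup X] [NormedSpace ℂ X]
    [CompleteSpace X] (J : Set ℝ) (hJ : IsOpen J) (F : ℝ → X →L[ℂ] X)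
    (hF : ∀ x : X, ContDiffOn ℝ (⊤ : ℕ∞) (fun t => F t x) J) :
    ∃ F' : ℝ → X →L[ℂ] X,
      (∀ t ∈ J, ∀ x : X, HasDerivAt (fun s => F s x) (F' t x) t) ∧
      (∀ x : X, ContDiffOn ℝ (⊤ : ℕ∞) (fun t => F' t x) J) := by
  have key : ∀ t ∈ J, ∃ A : X →L[ℂ] X, ∀ x : X, HasDerivAt (fun s => F s x) (A x) t := by
    intro t ht
    have hd : ∀ x, HasDerivAt (fun s => F s x) (deriv (fun s => F s x) t) t := fun x =>
      (((hF x).contDiffAt (hJ.mem_nhds ht)).differentiableAt (by simp)).hasDerivAt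
    have hT : Tendsto (fun (s : ℝ) (x : X) => (((s - t)⁻¹ : ℝ) • (F s - F t)) x) (𝓝[≠] t)
        (𝓝 (fun x => deriv (fun s => F s x) t)) := by
      rw [tendsto_pi_nhds]
      intro x
      have := hasDerivAt_iff_tendsto_slope.1 (hd x)
      simpa [slope_fun_def] using this
    exact ⟨continuousLinearMapOfTendsto _ hT, fun x => hd x⟩
  choose! F' hF' using key
  refine ⟨F', hF', fun x => ?_⟩
  exact ((contDiffOn_infty_iff_deriv_of_isOpen hJ).1 (hF x)).2.congr
    fun t ht => (hF' t ht x).deriv.symm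

/-- Pointwise C¹ implies norm continuity. -/
lemma continuousAt_of_pointwise {X : Type*} [NormedAddCommGroup X] [NormedSpace ℂ X]
    [CompleteSpace X] (J : Set ℝ) (hJ : IsOpen J) (F F' : ℝ → X →L[ℂ] X)
    (hd : ∀ t ∈ J, ∀ x : X, HasDerivAt (fun s => F s x) (F' t x) t)
    (hc : ∀ x : X, ContinuousOn (fun t => F' t x) J) (t : ℝ) (ht : t ∈ J) :
    ContinuousAt F t := by
  obtain ⟨r, hr, hrJ⟩ := Metric.nhds_basis_closedBall.mem_iff.1 (hJ.mem_nhds ht)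
  obtain ⟨C, hC⟩ := banach_steinhaus (g := fun s : Metric.closedBall t r => F' s) (by
    intro x
    obtain ⟨C, hC⟩ := (isCompact_closedBall t r).exists_bound_of_continuousOn ((hc x).mono hrJ)
    exact ⟨C, fun i => hC i i.2⟩)
  have hC0 : 0 ≤ C := (norm_nonneg _).trans (hC ⟨t, Metric.mem_closedBall_self hr.le⟩)
  have hb : ∀ s ∈ Metric.closedBall t r, ‖F s - F t‖ ≤ C * ‖s - t‖ := by
    intro s hs
    refine ContinuousLinearMap.opNorm_le_bound _ (by positivity) fun x => ?_
    have := (convex_closedBall t r).norm_image_sub_le_of_norm_hasDerivWithin_le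
      (f := fun s => F s x) (f' := fun s => F' s x) (C := C * ‖x‖)
      (fun u hu => (hd u (hrJ hu) x).hasDerivWithinAt)
      (fun u hu => (F' u).le_of_opNorm_le (hC ⟨u, hu⟩) x)
      (Metric.mem_closedBall_self hr.le) hs
    calc ‖(F s - F t) x‖ ≤ C * ‖x‖ * ‖s - t‖ := this
      _ = _ := by ring
  rw [ContinuousAt, tendsto_iff_norm_sub_tendsto_zero]
  have h0 : Tendsto (fun s : ℝ => C * ‖s - t‖) (𝓝 t) (𝓝 0) := by
    have : Continuous (fun s : ℝ => C * ‖s - t‖) := by fun_prop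
    simpa using this.tendsto t
  refine squeeze_zero' (Eventually.of_forall fun _ => norm_nonneg _) ?_ h0
  filter_upwards [Metric.closedBall_mem_nhds t hr] with s hs using hb s hs

/-- Pointwise differentiability with a norm continuous derivative is norm differentiability. -/
lemma hasDerivAt_of_pointwise {X : Type*} [NormedAddCommGroup X] [NormedSpace ℂ X]
    (J : Set ℝ) (hJ : IsOpen J) (F F' : ℝ → X →L[ℂ] X)
    (hd : ∀ t ∈ J, ∀ x : X, HasDerivAt (fun s => F s x) (F' t x) t)
    (t : ℝ) (ht : t ∈ J) (hc : ContinuousAt F' t) :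
    HasDerivAt F (F' t) t := by
  rw [hasDerivAt_iff_isLittleO, Asymptotics.isLittleO_iff]
  intro ε hε
  have h1 : ∀ᶠ s in 𝓝 t, s ∈ J ∧ ‖F' s - F' t‖ ≤ ε := by
    filter_upwards [hJ.mem_nhds ht, Metric.tendsto_nhds.1 hc ε hε] with s h1 h2
    exact ⟨h1, by rw [← dist_eq_norm]; exact h2.le⟩
  obtain ⟨r, hr, hrJ⟩ := Metric.nhds_basis_closedBall.mem_iff.1 h1
  filter_upwards [Metric.closedBall_mem_nhds t hr] with s hs
  refine ContinuousLinearMap.opNorm_le_bound _ (by positivity) fun x => ?_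
  have := (convex_closedBall t r).norm_image_sub_le_of_norm_hasDerivWithin_le
    (f := fun s => F s x - s • F' t x) (f' := fun s => F' s x - F' t x) (C := ε * ‖x‖)
    (fun u hu => by
      have := (hd u (hrJ hu).1 x).sub ((hasDerivAt_id u).smul_const (F' t x))
      rw [one_smul] at this
      exact this.hasDerivWithinAt)
    (fun u hu => (F' u - F' t).le_of_opNorm_le (hrJ hu).2 x)
    (Metric.mem_closedBall_self hr.le) hs
  calc ‖(F s - F t - (s - t) • F' t) x‖ = ‖F s x - s • F' t x - (F t x - t • F' t x)‖ := by
        congr 1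
        have : (F s - F t - (s - t) • F' t) x = F s x - F t x - (s - t) • F' t x := rfl
        rw [this, sub_smul]; abel
    _ ≤ ε * ‖x‖ * ‖s - t‖ := this
    _ = _ := by ring

lemma contDiffOn_of_pointwise {X : Type*} [NormedAddCommGroup X] [NormedSpace ℂ X]
    [CompleteSpace X] (J : Set ℝ) (hJ : IsOpen J) (n : ℕ) : ∀ (F : ℝ → X →L[ℂ] X),
    (∀ x : X, ContDiffOn ℝ (⊤ : ℕ∞) (fun t => F t x) J) → ContDiffOn ℝ n F J := by
  induction n with
  | zero =>
    intro F hF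
    obtain ⟨F', h1, h2⟩ := exists_pointwise_deriv J hJ F hF
    exact contDiffOn_zero.2 fun t ht => (continuousAt_of_pointwise J hJ F F' h1
      (fun x => (h2 x).continuousOn) t ht).continuousWithinAt
  | succ n ih =>
    intro F hF
    obtain ⟨F', h1, h2⟩ := exists_pointwise_deriv J hJ F hF
    obtain ⟨F'', h3, h4⟩ := exists_pointwise_deriv J hJ F' h2
    have hder : ∀ t ∈ J, HasDerivAt F (F' t) t := fun t ht =>
      hasDerivAt_of_pointwise J hJ F F' h1 t ht
        (continuousAt_of_pointwise J hJ F' F'' h3 (fun x => (h4 x).continuousOn) t ht)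
    push_cast
    refine (contDiffOn_succ_iff_deriv_of_isOpen hJ).2
      ⟨fun t ht => (hder t ht).differentiableAt.differentiableWithinAt, by simp, ?_⟩
    exact (ih F' h2).congr fun t ht => (hder t ht).deriv



/-- Let `X` be a Banach space (over `ℂ`), `J ⊆ ℝ` a nonempty open interval, and
`{F_t : X → X}` a family of continuous linear maps such that `t ↦ F_t x` is smooth on `J`
for every `x`.  If each `F_t` (for `t ∈ J`) is bijective, then the pointwise inverse family
is again a family of continuous linear maps depending smoothly on `t ∈ J`. -/
theorem stmt0 {X : Type*} [NormedAddCommGroup X] [NormedSpace ℂ X] [CompleteSpace X]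
    (J : Set ℝ) (hJopen : IsOpen J) (hJconn : J.OrdConnected) (hJne : J.Nonempty)
    (F : ℝ → X →L[ℂ] X)
    (hsmooth : ∀ x : X, ContDiffOn ℝ (⊤ : ℕ∞) (fun t => F t x) J)
    (hbij : ∀ t ∈ J, Function.Bijective (F t)) :
    ∃ G : ℝ → X →L[ℂ] X,
      (∀ t ∈ J, ∀ x : X, G t (F t x) = x ∧ F t (G t x) = x) ∧
      (∀ x : X, ContDiffOn ℝ (⊤ : ℕ∞) (fun t => G t x) J) := by
  have hF : ContDiffOn ℝ (⊤ : ℕ∞) F J :=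
    contDiffOn_infty.2 fun n => contDiffOn_of_pointwise J hJopen n F hsmooth
  have hu : ∀ t ∈ J, IsUnit (F t) := fun t ht =>
    ContinuousLinearMap.isUnit_iff_bijective.2 (hbij t ht)
  refine ⟨fun t => Ring.inverse (F t), fun t ht x => ⟨?_, ?_⟩, fun x t ht => ?_⟩
  · exact congrArg (fun A : X →L[ℂ] X => A x) (Ring.inverse_mul_cancel _ (hu t ht))
  · exact congrArg (fun A : X →L[ℂ] X => A x) (Ring.mul_inverse_cancel _ (hu t ht))
  · obtain ⟨u, hut⟩ := hu t ht
    have h1 : ContDiffAt ℝ (⊤ : ℕ∞) Ring.inverse (F t) := by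
      rw [← hut]; exact contDiffAt_ringInverse ℝ u
    have h2 : ContDiffWithinAt ℝ (⊤ : ℕ∞) (fun t => Ring.inverse (F t)) J t :=
      h1.comp_contDiffWithinAt t (hF t ht)
    exact (((ContinuousLinearMap.apply ℂ X x).restrictScalars ℝ).contDiff).comp_contDiffWithinAt h2
end

section
/- Let X be a Banach space and J an open real interval. For every family {F_t}_{t∈J} of continuous linear operators on X depending smoothly on t (in the sense that t ↦ F_t(x) is smooth for each x, with locally uniform control), and for every s ∈ J and x₀ ∈ X, the linear ODE x'(t) = F_t(x(t)) with x(s) = x₀ has a unique smooth solution x : J → X, given by the convergent series x(t) = x₀ + Σ_{n≥1} ∫_s^t ∫_s^{u₁} ⋯ ∫_s^{u_{n-1}} (F_{u₁} ∘ ⋯ ∘ F_{u_n})(x₀) du_n ⋯ du₁. -/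
open intervalIntegral

/-- The iterated Picard integrals: `picard F s x₀ n t` is the `n`-fold iterated integral
`∫_s^t ∫_s^{u₁} ⋯ ∫_s^{u_{n-1}} (F_{u₁} ∘ ⋯ ∘ F_{u_n}) x₀ du_n ⋯ du₁`
(with `picard F s x₀ 0 t = x₀`). -/
noncomputable def picard {X : Type*} [NormedAddCommGroup X] [NormedSpace ℝ X]
    (F : ℝ → X →L[ℝ] X) (s : ℝ) (x₀ : X) : ℕ → ℝ → X
  | 0 => fun _ => x₀
  | (n + 1) => fun t => ∫ u in s..t, F u (picard F s x₀ n u)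

open Set in
theorem picard_hasDerivAt {X : Type*} [NormedAddCommGroup X] [NormedSpace ℝ X] [CompleteSpace X]
    {J : Set ℝ} (hJopen : IsOpen J) (hJconn : J.OrdConnected)
    {F : ℝ → X →L[ℝ] X} (hF : ContinuousOn F J) {s : ℝ} (hs : s ∈ J) (x₀ : X) (n : ℕ) :
    ContinuousOn (picard F s x₀ n) J ∧
      ∀ t ∈ J, HasDerivAt (picard F s x₀ (n + 1)) (F t (picard F s x₀ n t)) t := by
  have key : ∀ n, ContinuousOn (picard F s x₀ n) J →
      ∀ t ∈ J, HasDerivAt (picard F s x₀ (n + 1)) (F t (picard F s x₀ n t)) t := by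
    intro n hn t ht
    have hc : ContinuousOn (fun u => F u (picard F s x₀ n u)) J := hF.clm_apply hn
    exact integral_hasDerivAt_right
      (hc.mono (hJconn.uIcc_subset hs ht)).intervalIntegrable
      (hc.stronglyMeasurableAtFilter hJopen t ht) (hc.continuousAt (hJopen.mem_nhds ht))
  have hcont : ContinuousOn (picard F s x₀ n) J := by
    induction n with
    | zero => exact continuousOn_const
    | succ n ih => exact fun t ht => (key n ih t ht).continuousAt.continuousWithinAt
  exact ⟨hcont, key n hcont⟩

open Set in
theorem picard_bound {X : Type*} [NormedAddCommGroup X] [NormedSpace ℝ X]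
    {I : Set ℝ} (hI : I.OrdConnected)
    {F : ℝ → X →L[ℝ] X} {C : ℝ} (hC : 0 ≤ C) (hF : ∀ t ∈ I, ‖F t‖ ≤ C)
    {s : ℝ} (hs : s ∈ I) (x₀ : X) (n : ℕ) :
    ∀ t ∈ I, ‖picard F s x₀ n t‖ ≤ C ^ n * ‖x₀‖ / n.factorial * |t - s| ^ n := by
  induction n with
  | zero => intro t _; simp [picard]
  | succ n ih =>
    intro t ht
    have h1 : ‖∫ u in s..t, F u (picard F s x₀ n u)‖ ≤
        |∫ u in s..t, C * (C ^ n * ‖x₀‖ / n.factorial) * |u - s| ^ n| := by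
      apply intervalIntegral.norm_integral_le_abs_of_norm_le
      · refine (MeasureTheory.ae_restrict_mem measurableSet_uIoc).mono fun u hu => ?_
        have huI : u ∈ I := hI.uIcc_subset hs ht (uIoc_subset_uIcc hu)
        calc ‖F u (picard F s x₀ n u)‖ ≤ ‖F u‖ * ‖picard F s x₀ n u‖ := (F u).le_opNorm _
          _ ≤ C * (C ^ n * ‖x₀‖ / n.factorial * |u - s| ^ n) :=
            mul_le_mul (hF u huI) (ih u huI) (norm_nonneg _) hC
          _ = _ := by ring
      · apply Continuous.intervalIntegrable
        fun_prop
    refine h1.trans (le_of_eq ?_)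
    rw [intervalIntegral.integral_const_mul, abs_mul, intervalIntegral.abs_intervalIntegral_eq,
      integral_pow_abs_sub_uIoc, abs_of_nonneg (by positivity), abs_of_nonneg (by positivity),
      Nat.factorial_succ]
    push_cast
    field_simp
    ring

open Set in
theorem exists_nhd_interval {J : Set ℝ} (hJopen : IsOpen J) (hJconn : J.OrdConnected)
    {s t : ℝ} (hs : s ∈ J) (ht : t ∈ J) :
    ∃ a b, s ∈ Ioo a b ∧ t ∈ Ioo a b ∧ Icc a b ⊆ J := by
  have hmin : min s t ∈ J := by rcases min_choice s t with h | h <;> rw [h] <;> assumption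
  have hmax : max s t ∈ J := by rcases max_choice s t with h | h <;> rw [h] <;> assumption
  obtain ⟨e, he, hB⟩ := Metric.isOpen_iff.1 hJopen _ hmin
  obtain ⟨d, hd, hD⟩ := Metric.isOpen_iff.1 hJopen _ hmax
  refine ⟨min s t - e / 2, max s t + d / 2, ?_, ?_, ?_⟩
  · constructor
    · linarith [min_le_left s t]
    · linarith [le_max_left s t]
  · constructor
    · linarith [min_le_right s t]
    · linarith [le_max_right s t]
  · apply hJconn.out
    · apply hB
      rw [Metric.mem_ball, Real.dist_eq, abs_lt]
      constructor <;> linarith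
    · apply hD
      rw [Metric.mem_ball, Real.dist_eq, abs_lt]
      constructor <;> linarith

theorem picard_at {X : Type*} [NormedAddCommGroup X] [NormedSpace ℝ X]
    (F : ℝ → X →L[ℝ] X) (s : ℝ) (x₀ : X) : HasSum (fun n => picard F s x₀ n s) x₀ := by
  have := hasSum_single (f := fun n => picard F s x₀ n s) 0 (by
    intro n hn
    obtain ⟨m, rfl⟩ := Nat.exists_eq_succ_of_ne_zero hn
    simp [picard])
  simpa [picard] using this

open Set in
theorem picard_sum {X : Type*} [NormedAddCommGroup X] [NormedSpace ℝ X] [CompleteSpace X]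
    {J : Set ℝ} (hJopen : IsOpen J) (hJconn : J.OrdConnected)
    {F : ℝ → X →L[ℝ] X} (hF : ContinuousOn F J) {s : ℝ} (hs : s ∈ J) (x₀ : X)
    {t : ℝ} (ht : t ∈ J) :
    Summable (fun n => picard F s x₀ n t) ∧
      HasDerivAt (fun z => ∑' n, picard F s x₀ n z) (F t (∑' n, picard F s x₀ n t)) t := by
  obtain ⟨a, b, hsI, htI, hI⟩ := exists_nhd_interval hJopen hJconn hs ht
  obtain ⟨C, hC⟩ := isCompact_Icc.exists_bound_of_continuousOn (hF.mono hI)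
  have hC0 : 0 ≤ C := (norm_nonneg _).trans (hC s (Ioo_subset_Icc_self hsI))
  have hsub : Ioo a b ⊆ J := Ioo_subset_Icc_self.trans hI
  have hb := picard_bound (I := Ioo a b) ordConnected_Ioo hC0
    (fun t ht => hC t (Ioo_subset_Icc_self ht)) hsI x₀
  let g' : ℕ → ℝ → X := fun n y => Nat.casesOn n 0 (fun m => F y (picard F s x₀ m y))
  let u : ℕ → ℝ := fun n => Nat.casesOn n 0
    (fun m => (C * ‖x₀‖) * ((C * (b - a)) ^ m / m.factorial))
  have hu : Summable u := by
    rw [← summable_nat_add_iff 1]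
    exact (Real.summable_pow_div_factorial (C * (b - a))).mul_left (C * ‖x₀‖)
  have hg : ∀ n y, y ∈ Ioo a b → HasDerivAt (picard F s x₀ n) (g' n y) y := by
    intro n y hy
    cases n with
    | zero => exact hasDerivAt_const y x₀
    | succ n => exact (picard_hasDerivAt hJopen hJconn hF hs x₀ n).2 y (hsub hy)
  have hg' : ∀ n y, y ∈ Ioo a b → ‖g' n y‖ ≤ u n := by
    intro n y hy
    cases n with
    | zero => simp [g', u]
    | succ n =>
      have hys : |y - s| ≤ b - a := by
        rw [abs_le]
        constructor <;> linarith [hy.1, hy.2, hsI.1, hsI.2]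
      calc ‖F y (picard F s x₀ n y)‖ ≤ ‖F y‖ * ‖picard F s x₀ n y‖ := (F y).le_opNorm _
        _ ≤ C * (C ^ n * ‖x₀‖ / n.factorial * |y - s| ^ n) :=
          mul_le_mul (hC y (Ioo_subset_Icc_self hy)) (hb n y hy) (norm_nonneg _) hC0
        _ ≤ C * (C ^ n * ‖x₀‖ / n.factorial * (b - a) ^ n) := by gcongr
        _ = (C * ‖x₀‖) * ((C * (b - a)) ^ n / n.factorial) := by rw [mul_pow]; ring
  have h0 := (picard_at F s x₀).summable
  have hsum := summable_of_summable_hasDerivAt_of_isPreconnected hu isOpen_Ioo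
    isPreconnected_Ioo hg hg' hsI h0 htI
  have hder := hasDerivAt_tsum_of_isPreconnected hu isOpen_Ioo
    isPreconnected_Ioo hg hg' hsI h0 htI
  refine ⟨hsum, ?_⟩
  convert hder using 1
  have hs' : Summable (fun n => g' n t) := .of_norm_bounded hu fun n => hg' n t htI
  rw [hs'.tsum_eq_zero_add, (F t).map_tsum hsum]
  simp [g']

/-- Let `X` be a Banach space, `J` an open interval.  For every smooth family
`{F_t}` of continuous linear operators on `X` and every `s ∈ J`, `x₀ ∈ X`, the linear ODE
`x'(t) = F_t (x t)`, `x s = x₀` has a smooth solution on `J`, unique on `J`, and given on `J`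
by the convergent series of iterated integrals `x t = Σ_n picard F s x₀ n t`. -/
theorem stmt2 {X : Type*} [NormedAddCommGroup X] [NormedSpace ℝ X] [CompleteSpace X]
    (J : Set ℝ) (hJopen : IsOpen J) (hJconn : J.OrdConnected) (hJne : J.Nonempty)
    (F : ℝ → X →L[ℝ] X)
    (hFsmooth : ContDiffOn ℝ (⊤ : ℕ∞) (fun t => F t) J)
    (s : ℝ) (hs : s ∈ J) (x₀ : X) :
    ∃ x : ℝ → X,
      (ContDiffOn ℝ (⊤ : ℕ∞) x J ∧ x s = x₀ ∧ ∀ t ∈ J, HasDerivWithinAt x (F t (x t)) J t) ∧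
      (∀ y : ℝ → X,
        (ContDiffOn ℝ (⊤ : ℕ∞) y J ∧ y s = x₀ ∧ ∀ t ∈ J, HasDerivWithinAt y (F t (y t)) J t) →
        ∀ t ∈ J, y t = x t) ∧
      (∀ t ∈ J, HasSum (fun n => picard F s x₀ n t) (x t)) := by
  have hF : ContinuousOn F J := hFsmooth.continuousOn
  have hx := fun t (ht : t ∈ J) => picard_sum hJopen hJconn hF hs x₀ ht
  have hxs : ∑' n, picard F s x₀ n s = x₀ := (picard_at F s x₀).tsum_eq
  refine ⟨fun t => ∑' n, picard F s x₀ n t,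
    ⟨?_, hxs, fun t ht => (hx t ht).2.hasDerivWithinAt⟩, ?_, fun t ht => (hx t ht).1.hasSum⟩
  · refine contDiffOn_infty.2 fun n => ?_
    induction n with
    | zero =>
      exact contDiffOn_zero.2 fun t ht => (hx t ht).2.continuousAt.continuousWithinAt
    | succ n ih =>
      push_cast
      refine (contDiffOn_succ_iff_deriv_of_isOpen hJopen).2
        ⟨fun t ht => (hx t ht).2.differentiableAt.differentiableWithinAt, by simp, ?_⟩
      have hFn : ContDiffOn ℝ n F J := contDiffOn_infty.1 hFsmooth n
      exact (hFn.clm_apply ih).congr fun t ht => (hx t ht).2.deriv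
  · rintro y ⟨-, hys, hy⟩ t ht
    obtain ⟨a, b, hsI, htI, hI⟩ := exists_nhd_interval hJopen hJconn hs ht
    obtain ⟨C, hC⟩ := isCompact_Icc.exists_bound_of_continuousOn (hF.mono hI)
    have hsub : Set.Ioo a b ⊆ J := Set.Ioo_subset_Icc_self.trans hI
    refine ODE_solution_unique_of_mem_Ioo (v := fun t x => F t x) (K := C.toNNReal)
      (s := fun _ => Set.univ) ?_ hsI
      (fun r hr => ⟨(hy r (hsub hr)).hasDerivAt (hJopen.mem_nhds (hsub hr)), trivial⟩)
      (fun r hr => ⟨(hx r (hsub hr)).2, trivial⟩) (hys.trans hxs.symm) htI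
    intro r hr
    refine ((F r).lipschitz.weaken ?_).lipschitzOnWith
    rw [← NNReal.coe_le_coe]
    exact (hC r (Set.Ioo_subset_Icc_self hr)).trans (Real.le_coe_toNNReal C)
end

section
/- Let A = ⊕_{n≥0} A_n be a nonnegatively graded associative algebra over a field of characteristic 0, and let D : A → A be the grading derivation D(a) = n·a for a ∈ A_n. Then the inclusion A₀ → A induces an isomorphism on periodic cyclic homology HP_•(A₀) ≅ HP_•(A). -/
open scoped TensorProduct
open Finset

section CyclicComplex

variable (k A : Type*) [CommRing k] [Ring A] [Algebra k A]

/-- The cyclic chain group `C_n(A) = A₊ ⊗ A^{⊗n}` over `k`. -/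
abbrev CycChain (n : ℕ) : Type _ :=
  Unitization k A ⊗[k] (PiTensorProduct k (fun _ : Fin n => A))

/-- The elementary chain `a₀ ⊗ f 0 ⊗ ⋯ ⊗ f (n-1)` in `C_n(A)`. -/
noncomputable def elemC (n : ℕ) (a₀ : Unitization k A) (f : ℕ → A) : CycChain k A n :=
  a₀ ⊗ₜ[k] PiTensorProduct.tprod k (fun i : Fin n => f (i : ℕ))

/-- The value of the Hochschild boundary `b` on the elementary chain
`a₀ ⊗ f 0 ⊗ ⋯ ⊗ f n` of degree `n+1`. -/
noncomputable def bElemF (n : ℕ) (a₀ : Unitization k A) (f : ℕ → A) : CycChain k A n :=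
  elemC k A n (a₀ * Unitization.inr (f 0)) (fun i => f (i + 1))
  + ∑ j ∈ Finset.range n, ((-1 : ℤ) ^ (j + 1)) •
      elemC k A n a₀
        (fun i => if i < j then f i else if i = j then f j * f (j + 1) else f (i + 1))
  + ((-1 : ℤ) ^ (n + 1)) • elemC k A n (Unitization.inr (f n) * a₀) f

/-- The value of the Connes operator `B` on the elementary chain
`a₀ ⊗ f 0 ⊗ ⋯ ⊗ f (n-1)` of degree `n` (using the `A`-component of `a₀`; `B` vanishes on
chains starting with `e`). -/
noncomputable def BElemF (n : ℕ) (a₀ : Unitization k A) (f : ℕ → A) : CycChain k A (n + 1) :=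
  ∑ j ∈ Finset.range (n + 1), ((-1 : ℤ) ^ (j * n)) •
    elemC k A (n + 1) 1
      (fun i => (fun m => if m = 0 then a₀.snd else f (m - 1)) ((j + i) % (n + 1)))

variable {k A}

/-- The even-to-odd differential `b + B` of the periodic cyclic complex
`C_even(A) = Π_n C_{2n}(A) → C_odd(A) = Π_n C_{2n+1}(A)`. -/
noncomputable def dEO
    (bop : ∀ n : ℕ, CycChain k A (n + 1) →ₗ[k] CycChain k A n)
    (Bop : ∀ n : ℕ, CycChain k A n →ₗ[k] CycChain k A (n + 1))
    (x : ∀ n : ℕ, CycChain k A (2 * n)) : ∀ n : ℕ, CycChain k A (2 * n + 1) :=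
  fun n => bop (2 * n + 1) (x (n + 1)) + Bop (2 * n) (x n)

/-- The odd-to-even differential `b + B` of the periodic cyclic complex. -/
noncomputable def dOE
    (bop : ∀ n : ℕ, CycChain k A (n + 1) →ₗ[k] CycChain k A n)
    (Bop : ∀ n : ℕ, CycChain k A n →ₗ[k] CycChain k A (n + 1))
    (y : ∀ n : ℕ, CycChain k A (2 * n + 1)) : ∀ n : ℕ, CycChain k A (2 * n) :=
  fun n => match n with
  | 0 => bop 0 (y 0)
  | (m + 1) => bop (2 * (m + 1)) (y (m + 1))
      + (show CycChain k A (2 * (m + 1)) from Bop (2 * m + 1) (y m))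

end CyclicComplex

/-- The degree-zero part of a graded algebra, as a subalgebra. -/
def degZeroSubalgebra {k A : Type*} [CommRing k] [Ring A] [Algebra k A]
    (𝒜 : ℕ → Submodule k A) [GradedAlgebra 𝒜] : Subalgebra k A where
  carrier := 𝒜 0
  mul_mem' := fun {a b} ha hb => by
    have h := SetLike.mul_mem_graded ha hb
    simpa using h
  one_mem' := SetLike.one_mem_graded 𝒜
  add_mem' := fun {a b} ha hb => (𝒜 0).add_mem ha hb
  zero_mem' := (𝒜 0).zero_mem
  algebraMap_mem' := fun r => by
    have h := (𝒜 0).smul_mem r (SetLike.one_mem_graded 𝒜)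
    simpa [Algebra.algebraMap_eq_smul_one] using h

/-- The map `Unitization k A₀ → Unitization k A` induced by the inclusion of a subalgebra. -/
noncomputable def unitizationIncl {k A : Type*} [CommRing k] [Ring A] [Algebra k A]
    (S : Subalgebra k A) (x : Unitization k S) : Unitization k A :=
  Unitization.inl x.fst + Unitization.inr (x.snd : A)


namespace HPG

section basic
variable (k : Type*) {A : Type*} [Field k] [Ring A] [Algebra k A]

/-- `g 0 ⊗ g 1 ⊗ ⋯ ⊗ g n` in `C_n`. -/
noncomputable def X (n : ℕ) (g : ℕ → A) : CycChain k A n :=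
  elemC k A n (Unitization.inr (g 0)) (fun i => g (i + 1))

/-- `e ⊗ g 0 ⊗ ⋯ ⊗ g (n-1)` in `C_n`. -/
noncomputable def Y (n : ℕ) (g : ℕ → A) : CycChain k A n := elemC k A n 1 g

variable {k}

def fc (j : ℕ) (g : ℕ → A) : ℕ → A :=
  fun i => if i < j then g i else if i = j then g j * g (j + 1) else g (i + 1)
def fcd (j : ℕ) (g : ℕ → ℕ) : ℕ → ℕ :=
  fun i => if i < j then g i else if i = j then g j + g (j + 1) else g (i + 1)
def cy (n : ℕ) (g : ℕ → A) : ℕ → A := fun i => if i = 0 then g n * g 0 else g i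
def cyd (n : ℕ) (g : ℕ → ℕ) : ℕ → ℕ := fun i => if i = 0 then g n + g 0 else g i
def rot {α : Type*} (N j : ℕ) (g : ℕ → α) : ℕ → α :=
  fun i => if j + i < N then g (j + i) else g (j + i - N)

def Hom (𝒜 : ℕ → Submodule k A) (g : ℕ → A) (d : ℕ → ℕ) : Prop := ∀ i, g i ∈ 𝒜 (d i)

theorem elemC_congr {n : ℕ} {a : Unitization k A} {f g : ℕ → A} (h : ∀ i < n, f i = g i) :
    elemC k A n a f = elemC k A n a g := by
  unfold elemC
  congr 2
  funext i
  exact h i i.2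

theorem X_congr {n : ℕ} {f g : ℕ → A} (h : ∀ i ≤ n, f i = g i) : X k n f = X k n g := by
  unfold X
  rw [h 0 (Nat.zero_le _)]
  exact elemC_congr fun i hi => h _ hi

theorem Y_congr {n : ℕ} {f g : ℕ → A} (h : ∀ i < n, f i = g i) : Y k n f = Y k n g :=
  elemC_congr h

theorem hom_fc {𝒜 : ℕ → Submodule k A} [GradedAlgebra 𝒜] {g : ℕ → A} {d : ℕ → ℕ}
    (h : Hom 𝒜 g d) (j : ℕ) : Hom 𝒜 (fc j g) (fcd j d) := by
  intro i
  unfold fc fcd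
  split_ifs
  · exact h _
  · exact SetLike.mul_mem_graded (h _) (h _)
  · exact h _

theorem hom_cy {𝒜 : ℕ → Submodule k A} [GradedAlgebra 𝒜] {g : ℕ → A} {d : ℕ → ℕ}
    (h : Hom 𝒜 g d) (j : ℕ) : Hom 𝒜 (cy j g) (cyd j d) := by
  intro i
  unfold cy cyd
  split_ifs
  · exact SetLike.mul_mem_graded (h _) (h _)
  · exact h _

theorem hom_rot {𝒜 : ℕ → Submodule k A} {g : ℕ → A} {d : ℕ → ℕ}
    (h : Hom 𝒜 g d) (N j : ℕ) : Hom 𝒜 (rot N j g) (rot N j d) := by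
  intro i
  unfold rot
  split_ifs <;> exact h _

theorem exists_D (𝒜 : ℕ → Submodule k A) [GradedAlgebra 𝒜] :
    ∃ D : A →ₗ[k] A, ∀ n : ℕ, ∀ a ∈ 𝒜 n, D a = (n : ℤ) • a := by
  classical
  refine ⟨DirectSum.toModule k ℕ A (fun n => (n : k) • (𝒜 n).subtype) ∘ₗ
    (DirectSum.decomposeLinearEquiv 𝒜).toLinearMap, fun n a ha => ?_⟩
  simp only [LinearMap.comp_apply, LinearEquiv.coe_coe, DirectSum.decomposeLinearEquiv_apply]
  rw [DirectSum.decompose_of_mem 𝒜 ha]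
  erw [DirectSum.toModule_lof]
  simp [Nat.cast_smul_eq_nsmul]

/-- Linear maps on chains agreeing on elementary chains agree. -/
theorem ext_elem {M : Type*} [AddCommGroup M] [Module k M] {n : ℕ}
    {Φ Ψ : CycChain k A n →ₗ[k] M} (h : ∀ a f, Φ (elemC k A n a f) = Ψ (elemC k A n a f)) :
    Φ = Ψ := by
  apply TensorProduct.ext'
  intro a y
  induction y using PiTensorProduct.induction_on with
  | smul_tprod r f =>
    have := h a (fun i => if hi : i < n then f ⟨i, hi⟩ else 0)
    simp only [elemC, Fin.is_lt, dite_true, Fin.eta] at this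
    simp only [TensorProduct.tmul_smul, map_smul, this]
  | add x y hx hy => simp only [TensorProduct.tmul_add, map_add, hx, hy]

theorem elem_add {n : ℕ} (a b : Unitization k A) (f : ℕ → A) :
    elemC k A n (a + b) f = elemC k A n a f + elemC k A n b f := TensorProduct.add_tmul _ _ _

theorem elem_smul {n : ℕ} (c : k) (b : Unitization k A) (f : ℕ → A) :
    elemC k A n (c • b) f = c • elemC k A n b f := by
  unfold elemC; rw [TensorProduct.smul_tmul']

theorem elem_update_add {n : ℕ} (a : Unitization k A) (f : ℕ → A) (i : ℕ) (hi : i < n) (x y : A) :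
    elemC k A n a (Function.update f i (x + y)) = elemC k A n a (Function.update f i x)
      + elemC k A n a (Function.update f i y) := by
  have key : ∀ z, (fun j : Fin n => Function.update f i z (j : ℕ)) =
      Function.update (fun j : Fin n => f j) ⟨i, hi⟩ z := by
    intro z; funext j
    by_cases hj : j = ⟨i, hi⟩
    · subst hj; simp
    · have : (j : ℕ) ≠ i := fun h => hj (Fin.ext h)
      simp [Function.update_of_ne, this, hj]
  simp only [elemC, key, MultilinearMap.map_update_add, TensorProduct.tmul_add]

theorem elem_update_smul {n : ℕ} (a : Unitization k A) (f : ℕ → A) (i : ℕ) (hi : i < n)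
    (c : k) (x : A) :
    elemC k A n a (Function.update f i (c • x)) = c • elemC k A n a (Function.update f i x) := by
  have key : ∀ z, (fun j : Fin n => Function.update f i z (j : ℕ)) =
      Function.update (fun j : Fin n => f j) ⟨i, hi⟩ z := by
    intro z; funext j
    by_cases hj : j = ⟨i, hi⟩
    · subst hj; simp
    · have : (j : ℕ) ≠ i := fun h => hj (Fin.ext h)
      simp [Function.update_of_ne, this, hj]
  simp only [elemC, key, MultilinearMap.map_update_smul, TensorProduct.tmul_smul]

/-- Linear maps on chains agreeing on homogeneous elementary chains agree. -/
theorem ext_hom (𝒜 : ℕ → Submodule k A) [GradedAlgebra 𝒜] {M : Type*} [AddCommGroup M]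
    [Module k M] {n : ℕ} {Φ Ψ : CycChain k A n →ₗ[k] M}
    (hX : ∀ g d, Hom 𝒜 g d → Φ (X k n g) = Ψ (X k n g))
    (hY : ∀ g d, Hom 𝒜 g d → Φ (Y k n g) = Ψ (Y k n g)) : Φ = Ψ := by
  classical
  have zero_mem_hom : ∀ s : ℕ, s ≤ n → ∀ (f : ℕ → A),
      (∀ i, s ≤ i → ∃ d, f i ∈ 𝒜 d) → ∀ a : Unitization k A,
      (a = 1 ∨ ∃ d, ∃ b ∈ 𝒜 d, a = Unitization.inr b) →
      Φ (elemC k A n a f) = Ψ (elemC k A n a f) := by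
    intro s
    induction s with
    | zero =>
      intro _ f hf a ha
      choose d hd using fun i => hf i (Nat.zero_le _)
      rcases ha with rfl | ⟨e, b, hb, rfl⟩
      · exact hY f d hd
      · have := hX (fun i => if i = 0 then b else f (i - 1))
          (fun i => if i = 0 then e else d (i - 1)) (by
            intro i
            by_cases hi : i = 0
            · simpa [hi] using hb
            · simpa [hi] using hd _)
        simpa [X] using this
    | succ s ih =>
      intro hs f hf a ha
      have hfs : f = Function.update f s (f s) := by simp
      rw [hfs]
      induction f s using DirectSum.Decomposition.inductionOn 𝒜 with
      | zero =>
        have : (0 : A) = (0 : k) • (0 : A) := by simp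
        rw [this, elem_update_smul a f s (by omega)]
        simp
      | @homogeneous e m =>
        apply ih (by omega) _ _ a ha
        intro i hi
        by_cases his : i = s
        · subst his
          refine ⟨e, ?_⟩
          rw [Function.update_self]
          exact m.2
        · simpa [his] using hf i (by omega)
      | add x y hx hy =>
        rw [elem_update_add a f s (by omega), map_add, map_add, hx, hy]
  apply ext_elem
  intro a f
  have hf : ∀ a : Unitization k A, (a = 1 ∨ ∃ d, ∃ b ∈ 𝒜 d, a = Unitization.inr b) →
      Φ (elemC k A n a f) = Ψ (elemC k A n a f) := by
    intro a ha
    have := zero_mem_hom n le_rfl (fun i => if i < n then f i else 0) (by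
      intro i hi
      exact ⟨0, by simp [not_lt.mpr hi]⟩) a ha
    rwa [elemC_congr (g := f) (fun i hi => by simp [hi])] at this
  have ha : a = a.fst • (1 : Unitization k A) + Unitization.inr a.snd := by
    ext <;> simp
  rw [ha, elem_add, elem_smul, map_add, map_add, map_smul, map_smul, hf 1 (Or.inl rfl)]
  congr 1
  induction a.snd using DirectSum.Decomposition.inductionOn 𝒜 with
  | zero =>
    have : (Unitization.inr (0 : A) : Unitization k A) = (0 : k) • 0 := by simp
    rw [this, elem_smul]; simp
  | homogeneous m => exact hf _ (Or.inr ⟨_, _, m.2, rfl⟩)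
  | add x y hx hy => rw [Unitization.inr_add, elem_add, map_add, map_add, hx, hy]

end basic

section ops
variable {k : Type*} {A : Type*} [Field k] [Ring A] [Algebra k A]

/-- `A^{⊗(n+1)} → A ⊗ A^{⊗n}`. -/
noncomputable def unC (n : ℕ) : (PiTensorProduct k (fun _ : Fin (n + 1) => A)) →ₗ[k]
    A ⊗[k] (PiTensorProduct k (fun _ : Fin n => A)) :=
  PiTensorProduct.lift (LinearMap.uncurryLeft (M := fun _ : Fin (n + 1) => A)
    { toFun := fun x => (TensorProduct.mk k A _ x).compMultilinearMap (PiTensorProduct.tprod k)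
      map_add' := fun x y => by ext; simp
      map_smul' := fun c x => by ext; simp [TensorProduct.smul_tmul'] })

theorem unC_tprod (n : ℕ) (f : ℕ → A) :
    unC (k := k) n (PiTensorProduct.tprod k (fun i : Fin (n + 1) => f i)) =
      f 0 ⊗ₜ PiTensorProduct.tprod k (fun i : Fin n => f (i + 1)) := by
  unfold unC
  rw [PiTensorProduct.lift.tprod, LinearMap.uncurryLeft_apply]
  simp [Fin.tail_def]

/-- `A₊ ⊗ A^{⊗n} → A^{⊗(n+1)}`. -/
noncomputable def consC (n : ℕ) : CycChain k A n →ₗ[k]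
    (PiTensorProduct k (fun _ : Fin (n + 1) => A)) :=
  TensorProduct.lift ((PiTensorProduct.lift.toLinearMap ∘ₗ
    (MultilinearMap.curryLeft (M := fun _ : Fin (n + 1) => A) (PiTensorProduct.tprod k))) ∘ₗ
    (Unitization.sndHom k k A))

theorem consC_elem (n : ℕ) (a : Unitization k A) (f : ℕ → A) :
    consC n (elemC k A n a f) = PiTensorProduct.tprod k
      (fun i : Fin (n + 1) => if (i : ℕ) = 0 then a.snd else f ((i : ℕ) - 1)) := by
  unfold consC elemC
  rw [TensorProduct.lift.tmul]
  simp only [LinearMap.comp_apply, LinearEquiv.coe_coe, PiTensorProduct.lift.tprod,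
    MultilinearMap.curryLeft_apply]
  congr 1
  funext i
  refine Fin.cases ?_ (fun i => ?_) i
  · simp
    try rfl
  · simp

/-- Rotation. -/
noncomputable def R (n j : ℕ) : CycChain k A n →ₗ[k] CycChain k A (n + 1) :=
  TensorProduct.mk k (Unitization k A) _ 1 ∘ₗ
    (PiTensorProduct.reindex k (fun _ : Fin (n + 1) => A)
      (Equiv.addLeft (Fin.ofNat (n + 1) j)).symm).toLinearMap ∘ₗ consC n

theorem R_elem (n j : ℕ) (a : Unitization k A) (f : ℕ → A) :
    R n j (elemC k A n a f) = elemC k A (n + 1) 1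
      (fun i => (fun m => if m = 0 then a.snd else f (m - 1)) ((j + i) % (n + 1))) := by
  unfold R
  simp only [LinearMap.comp_apply, consC_elem, LinearEquiv.coe_coe]
  erw [PiTensorProduct.reindex_tprod]
  unfold elemC
  simp only [TensorProduct.mk_apply]
  congr 2
  funext i
  simp only [Equiv.symm_symm, Equiv.coe_addLeft, Fin.val_add, Fin.val_ofNat, Nat.mod_add_mod]

theorem rot_mod {α : Type*} (N j i : ℕ) (hj : j ≤ N) (hi : i < N) (g : ℕ → α) :
    g ((j + i) % N) = rot N j g i := by
  unfold rot
  split_ifs with h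
  · rw [Nat.mod_eq_of_lt h]
  · rw [Nat.mod_eq_sub_mod (by omega), Nat.mod_eq_of_lt (by omega)]

theorem R_X (n j : ℕ) (hj : j ≤ n + 1) (g : ℕ → A) :
    R n j (X k n g) = Y k (n + 1) (rot (n + 1) j g) := by
  unfold X
  rw [R_elem]
  apply elemC_congr
  intro i hi
  rw [← rot_mod _ _ _ hj hi]
  simp only [Unitization.snd_inr]
  split_ifs with h
  · rw [h]
  · rw [Nat.sub_add_cancel (by omega)]

theorem elemC_zero_at {n : ℕ} (a : Unitization k A) (f : ℕ → A) (i : ℕ) (hi : i < n)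
    (h : f i = 0) : elemC k A n a f = 0 := by
  have := elem_update_smul a f i hi 0 0
  rw [smul_zero, zero_smul, ← h, Function.update_eq_self] at this
  exact this

theorem R_Y (n j : ℕ) (hj : j ≤ n + 1) (g : ℕ → A) :
    R n j (Y k n g) = 0 := by
  unfold Y
  rw [R_elem]
  by_cases h : j = 0
  · apply elemC_zero_at _ _ 0 (by omega)
    simp [h]
  · apply elemC_zero_at _ _ (n + 1 - j) (by omega)
    have : (j + (n + 1 - j)) = n + 1 := by omega
    simp [this]

/-- Apply `D` in slot `l`. -/
noncomputable def Ds (D : A →ₗ[k] A) (n l : ℕ) : CycChain k A n →ₗ[k] CycChain k A n :=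
  LinearMap.lTensor _ (PiTensorProduct.map (fun i : Fin n => if (i : ℕ) = l then D else LinearMap.id))

theorem Ds_elem (D : A →ₗ[k] A) (n l : ℕ) (hl : l < n) (a : Unitization k A) (f : ℕ → A) (m : ℤ)
    (h : D (f l) = m • f l) :
    Ds D n l (elemC k A n a f) = m • elemC k A n a f := by
  have h2 : Ds D n l (elemC k A n a f) =
      elemC k A n a (Function.update f l ((m : k) • f l)) := by
    unfold Ds elemC
    rw [LinearMap.lTensor_tmul, PiTensorProduct.map_tprod]
    congr 2
    funext i
    by_cases hi : (i : ℕ) = l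
    · subst hi
      simp [h, Int.cast_smul_eq_zsmul]
    · simp [hi]
  rw [h2, elem_update_smul a f l hl, Function.update_eq_self]
  exact Int.cast_smul_eq_zsmul k m (elemC k A n a f)

noncomputable def iop (D : A →ₗ[k] A) (n : ℕ) : CycChain k A (n + 1) →ₗ[k] CycChain k A n :=
  LinearMap.rTensor _ (TensorProduct.lift ((LinearMap.mul k (Unitization k A)).compl₂
      (Unitization.inrHom k k A ∘ₗ D))) ∘ₗ
  (TensorProduct.assoc k (Unitization k A) A (PiTensorProduct k (fun _ : Fin n => A))).symm.toLinearMap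
  ∘ₗ LinearMap.lTensor _ (unC n)

theorem iop_elem (D : A →ₗ[k] A) (n : ℕ) (a : Unitization k A) (f : ℕ → A) :
    iop D n (elemC k A (n + 1) a f) =
      elemC k A n (a * Unitization.inr (D (f 0))) (fun i => f (i + 1)) := by
  unfold iop elemC
  simp only [LinearMap.comp_apply, LinearMap.lTensor_tmul, unC_tprod, LinearEquiv.coe_coe,
    TensorProduct.assoc_symm_tmul, LinearMap.rTensor_tmul, TensorProduct.lift.tmul]
  rfl

noncomputable def Sop (D : A →ₗ[k] A) (n : ℕ) : CycChain k A n →ₗ[k] CycChain k A (n + 1) :=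
  ∑ j ∈ range (n + 1), ((-1 : ℤ) ^ ((j + 1) * n)) • ∑ l ∈ range j, R n (j + 1) ∘ₗ Ds D n l

noncomputable def Lop (D : A →ₗ[k] A) (n : ℕ) : CycChain k A n →ₗ[k] CycChain k A n :=
  LinearMap.rTensor _ (Unitization.inrHom k k A ∘ₗ D ∘ₗ Unitization.sndHom k k A) +
    ∑ l ∈ range n, Ds D n l

section eval
variable {𝒜 : ℕ → Submodule k A} {D : A →ₗ[k] A} {g : ℕ → A} {d : ℕ → ℕ}

theorem Ds_X (hD : ∀ n : ℕ, ∀ a ∈ 𝒜 n, D a = (n : ℤ) • a) (hg : Hom 𝒜 g d)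
    (n l : ℕ) (hl : l < n) : Ds D n l (X k n g) = (d (l + 1) : ℤ) • X k n g :=
  Ds_elem D n l hl _ _ _ (hD _ _ (hg _))

theorem Ds_Y (hD : ∀ n : ℕ, ∀ a ∈ 𝒜 n, D a = (n : ℤ) • a) (hg : Hom 𝒜 g d)
    (n l : ℕ) (hl : l < n) : Ds D n l (Y k n g) = (d l : ℤ) • Y k n g :=
  Ds_elem D n l hl _ _ _ (hD _ _ (hg _))

theorem iop_X (hD : ∀ n : ℕ, ∀ a ∈ 𝒜 n, D a = (n : ℤ) • a) (hg : Hom 𝒜 g d)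
    (n : ℕ) : iop D n (X k (n + 1) g) = (d 1 : ℤ) • X k n (fc 0 g) := by
  unfold X
  rw [iop_elem, hD _ _ (hg _), ← Int.cast_smul_eq_zsmul k, ← Int.cast_smul_eq_zsmul k, ← elem_smul]
  simp [fc, Unitization.inr_smul, ← Unitization.inr_mul]

theorem iop_Y (hD : ∀ n : ℕ, ∀ a ∈ 𝒜 n, D a = (n : ℤ) • a) (hg : Hom 𝒜 g d)
    (n : ℕ) : iop D n (Y k (n + 1) g) = (d 0 : ℤ) • X k n g := by
  unfold X Y
  rw [iop_elem, hD _ _ (hg _), ← Int.cast_smul_eq_zsmul k, ← Int.cast_smul_eq_zsmul k, ← elem_smul]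
  simp [Unitization.inr_smul]

theorem Sop_X (hD : ∀ n : ℕ, ∀ a ∈ 𝒜 n, D a = (n : ℤ) • a) (hg : Hom 𝒜 g d)
    (n : ℕ) : Sop D n (X k n g) = ∑ j ∈ range (n + 1), ((-1 : ℤ) ^ ((j + 1) * n) *
    ∑ l ∈ range j, (d (l + 1) : ℤ)) • Y k (n + 1) (rot (n + 1) (j + 1) g) := by
  unfold Sop
  rw [LinearMap.sum_apply]
  refine Finset.sum_congr rfl fun j hj => ?_
  rw [Finset.mem_range] at hj
  rw [LinearMap.smul_apply, LinearMap.sum_apply, mul_smul, Finset.sum_smul]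
  congr 1
  refine Finset.sum_congr rfl fun l hl => ?_
  rw [Finset.mem_range] at hl
  rw [LinearMap.comp_apply, Ds_X hD hg n l (by omega), map_zsmul, R_X _ _ (by omega)]

theorem Sop_Y (hD : ∀ n : ℕ, ∀ a ∈ 𝒜 n, D a = (n : ℤ) • a) (hg : Hom 𝒜 g d)
    (n : ℕ) : Sop D n (Y k n g) = 0 := by
  unfold Sop
  rw [LinearMap.sum_apply]
  refine Finset.sum_eq_zero fun j hj => ?_
  rw [Finset.mem_range] at hj
  rw [LinearMap.smul_apply, LinearMap.sum_apply, Finset.sum_eq_zero, smul_zero]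
  intro l hl
  rw [Finset.mem_range] at hl
  rw [LinearMap.comp_apply, Ds_Y hD hg n l (by omega), map_zsmul, R_Y _ _ (by omega), smul_zero]

theorem Lop_X (hD : ∀ n : ℕ, ∀ a ∈ 𝒜 n, D a = (n : ℤ) • a) (hg : Hom 𝒜 g d)
    (n : ℕ) : Lop D n (X k n g) = (∑ l ∈ range (n + 1), (d l : ℤ)) • X k n g := by
  unfold Lop
  rw [LinearMap.add_apply, LinearMap.sum_apply, Finset.sum_range_succ', add_smul, add_comm,
    Finset.sum_smul]
  congr 1
  · refine Finset.sum_congr rfl fun l hl => ?_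
    rw [Finset.mem_range] at hl
    exact Ds_X hD hg n l hl
  · unfold X
    rw [← Int.cast_smul_eq_zsmul k, ← elem_smul, ← Unitization.inr_smul, Int.cast_smul_eq_zsmul k,
      ← hD _ _ (hg _)]
    rfl

theorem Lop_Y (hD : ∀ n : ℕ, ∀ a ∈ 𝒜 n, D a = (n : ℤ) • a) (hg : Hom 𝒜 g d)
    (n : ℕ) : Lop D n (Y k n g) = (∑ l ∈ range n, (d l : ℤ)) • Y k n g := by
  unfold Lop
  rw [LinearMap.add_apply, LinearMap.sum_apply, Finset.sum_smul]
  have : (LinearMap.rTensor (PiTensorProduct k (fun _ : Fin n => A))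
      (Unitization.inrHom k k A ∘ₗ D ∘ₗ Unitization.sndHom k k A)) (Y k n g) = 0 := by
    unfold Y elemC
    rw [LinearMap.rTensor_tmul]
    simp only [LinearMap.comp_apply]
    have : (Unitization.sndHom k k A) 1 = 0 := rfl
    rw [this]
    simp
  rw [this, zero_add]
  refine Finset.sum_congr rfl fun l hl => ?_
  rw [Finset.mem_range] at hl
  exact Ds_Y hD hg n l hl

end eval

section bB
variable {b : ∀ n : ℕ, CycChain k A (n + 1) →ₗ[k] CycChain k A n}
    {B : ∀ n : ℕ, CycChain k A n →ₗ[k] CycChain k A (n + 1)}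

theorem b_X (hb : ∀ (n : ℕ) (a₀ : Unitization k A) (f : ℕ → A),
      b n (elemC k A (n + 1) a₀ f) = bElemF k A n a₀ f) (n : ℕ) (g : ℕ → A) :
    b n (X k (n + 1) g) = ∑ j ∈ range (n + 1), ((-1 : ℤ) ^ j) • X k n (fc j g)
      + ((-1 : ℤ) ^ (n + 1)) • X k n (cy (n + 1) g) := by
  unfold X
  rw [hb, bElemF, Finset.sum_range_succ']
  congr 1
  · rw [add_comm]
    congr 1
    · refine Finset.sum_congr rfl fun j _ => ?_
      congr 1
      have : fc (j + 1) g 0 = g 0 := by simp [fc]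
      rw [this]
      apply elemC_congr
      intro i _
      simp [fc]
    · simp [fc]
  · congr 1
    simp [cy]

theorem b_Y (hb : ∀ (n : ℕ) (a₀ : Unitization k A) (f : ℕ → A),
      b n (elemC k A (n + 1) a₀ f) = bElemF k A n a₀ f) (n : ℕ) (g : ℕ → A) :
    b n (Y k (n + 1) g) = X k n g - ∑ j ∈ range n, ((-1 : ℤ) ^ j) • Y k n (fc j g)
      - ((-1 : ℤ) ^ n) • X k n (rot (n + 1) n g) := by
  have h1 : b n (Y k (n + 1) g) = X k n g + ∑ j ∈ range n, ((-1 : ℤ) ^ (j + 1)) • Y k n (fc j g)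
      + ((-1 : ℤ) ^ (n + 1)) • X k n (rot (n + 1) n g) := by
    unfold Y
    rw [hb, bElemF]
    congr 1
    · congr 1
      rw [one_mul]; rfl
    · congr 1
      have h0 : rot (n + 1) n g 0 = g n := by simp [rot]
      unfold X
      rw [mul_one, h0]
      apply elemC_congr
      intro i hi
      have h1 : ¬ (n + (i + 1) < n + 1) := by omega
      have h2 : n + (i + 1) - (n + 1) = i := by omega
      simp only [rot, h1, h2, if_false]
  rw [h1]
  simp only [pow_succ, mul_neg, mul_one, neg_smul, Finset.sum_neg_distrib]
  abel

theorem B_X (hB : ∀ (n : ℕ) (a₀ : Unitization k A) (f : ℕ → A),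
      B n (elemC k A n a₀ f) = BElemF k A n a₀ f) (n : ℕ) (g : ℕ → A) :
    B n (X k n g) = ∑ j ∈ range (n + 1), ((-1 : ℤ) ^ (j * n)) •
      Y k (n + 1) (rot (n + 1) j g) := by
  unfold X
  rw [hB, BElemF]
  refine Finset.sum_congr rfl fun j hj => ?_
  rw [Finset.mem_range] at hj
  have h := R_elem n j (Unitization.inr (g 0) : Unitization k A) (fun i => g (i + 1))
  rw [← R_X _ _ (by omega)]
  unfold X
  rw [h]

theorem B_Y (hB : ∀ (n : ℕ) (a₀ : Unitization k A) (f : ℕ → A),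
      B n (elemC k A n a₀ f) = BElemF k A n a₀ f) (n : ℕ) (g : ℕ → A) :
    B n (Y k n g) = 0 := by
  unfold Y
  rw [hB, BElemF]
  refine Finset.sum_eq_zero fun j hj => ?_
  rw [Finset.mem_range] at hj
  rw [← R_elem]
  have := R_Y (k := k) n j (by omega) g
  unfold Y at this
  rw [this, smul_zero]

theorem rot_full {α : Type*} (N : ℕ) (g : ℕ → α) (i : ℕ) : rot N N g i = g i := by
  simp [rot]

theorem rot_zero {α : Type*} (N : ℕ) (g : ℕ → α) (i : ℕ) (h : i < N) : rot N 0 g i = g i := by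
  simp [rot, h]

theorem B_X' (hB : ∀ (n : ℕ) (a₀ : Unitization k A) (f : ℕ → A),
      B n (elemC k A n a₀ f) = BElemF k A n a₀ f) (n : ℕ) (g : ℕ → A) :
    B n (X k n g) = ∑ j ∈ range (n + 1), ((-1 : ℤ) ^ ((j + 1) * n)) •
      Y k (n + 1) (rot (n + 1) (j + 1) g) := by
  rw [B_X hB, Finset.sum_range_succ', Finset.sum_range_succ]
  congr 1
  have h1 : (-1 : ℤ) ^ ((n + 1) * n) = 1 := by
    rw [mul_comm]; exact Even.neg_one_pow (Nat.even_mul_succ_self n)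
  rw [h1, zero_mul, pow_zero]
  congr 1
  apply Y_congr
  intro i hi
  rw [rot_full, rot_zero _ _ _ hi]

end bB
end ops

section cartan
variable {k : Type*} {A : Type*} [Field k] [Ring A] [Algebra k A]

def fcN (N q : ℕ) (g : ℕ → A) : ℕ → A := if q < N then fc q g else cy N g
def fcNd (N q : ℕ) (d : ℕ → ℕ) : ℕ → ℕ := if q < N then fcd q d else cyd N d

theorem hom_fcN {𝒜 : ℕ → Submodule k A} [GradedAlgebra 𝒜] {g : ℕ → A} {d : ℕ → ℕ}
    (h : Hom 𝒜 g d) (N q : ℕ) : Hom 𝒜 (fcN N q g) (fcNd N q d) := by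
  unfold fcN fcNd
  split_ifs
  · exact hom_fc h q
  · exact hom_cy h N

/-- partial weights -/
def W (d : ℕ → ℕ) (j : ℕ) : ℤ := ∑ l ∈ range j, (d (l + 1) : ℤ)

theorem W_succ (d : ℕ → ℕ) (j : ℕ) : W d (j + 1) = W d j + d (j + 1) := Finset.sum_range_succ _ _
theorem W_zero (d : ℕ → ℕ) : W d 0 = 0 := rfl

theorem W_fcNd (N q j : ℕ) (hj : j < N) (d : ℕ → ℕ) :
    (if q = 0 then (d 1 : ℤ) else 0) + W (fcNd N q d) j = if j < q then W d j else W d (j + 1) := by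
  induction j with
  | zero =>
    by_cases h : q = 0
    · simp [h, W_succ, W_zero]
    · simp [h, W_zero, Nat.pos_of_ne_zero h]
  | succ j ih =>
    rw [W_succ, ← add_assoc, ih (by omega)]
    unfold fcNd
    by_cases hq : q < N
    · simp only [hq, if_true, fcd]
      rcases lt_trichotomy (j + 1) q with h | h | h
      · simp [h, show j < q by omega, W_succ]
      · subst h
        simp [W_succ, add_assoc]
      · have h1 : ¬ (j < q) := by omega
        have h2 : ¬ (j + 1 < q) := by omega
        have h3 : ¬ (j + 1 = q) := by omega
        simp [h1, h2, h3, W_succ]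
    · have h1 : j < q := by omega
      have h2 : j + 1 < q := by omega
      simp [hq, cyd, h1, h2, W_succ]

theorem sum_fcd (N q : ℕ) (d : ℕ → ℕ) : ∑ l ∈ range N, (fcd q d l : ℤ) =
    if N ≤ q then ∑ l ∈ range N, (d l : ℤ) else ∑ l ∈ range (N + 1), (d l : ℤ) := by
  induction N with
  | zero =>
    simp
  | succ N ih =>
    rw [Finset.sum_range_succ, ih]
    unfold fcd
    rcases lt_trichotomy N q with h | h | h
    · simp [h, show N ≤ q by omega, show N + 1 ≤ q by omega, Finset.sum_range_succ]
    · subst h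
      simp [Finset.sum_range_succ, add_assoc]
    · simp [show ¬ N < q by omega, show ¬ N ≤ q by omega, show ¬ N + 1 ≤ q by omega,
        show N ≠ q by omega, Finset.sum_range_succ]

theorem sum_fcNd (N q : ℕ) (hN : 0 < N) (d : ℕ → ℕ) : ∑ l ∈ range N, (fcNd N q d l : ℤ) =
    ∑ l ∈ range (N + 1), (d l : ℤ) := by
  unfold fcNd
  split_ifs with h
  · rw [sum_fcd, if_neg (by omega)]
  · obtain ⟨M, rfl⟩ : ∃ M, N = M + 1 := ⟨N - 1, by omega⟩
    rw [Finset.sum_range_succ', Finset.sum_range_succ, Finset.sum_range_succ' _ M]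
    simp [cyd]
    ring

theorem sum_rot (N j : ℕ) (hj : j ≤ N) (d : ℕ → ℕ) : ∑ l ∈ range N, ((rot N j d l : ℕ) : ℤ) =
    ∑ l ∈ range N, (d l : ℤ) := by
  induction j with
  | zero => exact Finset.sum_congr rfl fun l hl => by rw [rot_zero _ _ _ (Finset.mem_range.mp hl)]
  | succ j ih =>
    rw [← ih (by omega)]
    obtain ⟨M, rfl⟩ : ∃ M, N = M + 1 := ⟨N - 1, by omega⟩
    rw [Finset.sum_range_succ, Finset.sum_range_succ' _ M]
    congr 1
    · refine Finset.sum_congr rfl fun l hl => ?_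
      rw [Finset.mem_range] at hl
      unfold rot
      rw [show j + 1 + l = j + (l + 1) by omega]
    · unfold rot
      rw [if_neg (by omega), if_pos (by omega), show j + 1 + M - (M + 1) = j by omega, add_zero]

theorem rot_rot (n j : ℕ) (hj : j ≤ n) {α : Type*} (g : ℕ → α) (i : ℕ) (hi : i ≤ n) :
    rot (n + 1) n (rot (n + 1) (j + 1) g) i = rot (n + 1) j g i := by
  unfold rot
  split_ifs <;> first | omega | (congr 1 <;> omega)

theorem rot_rot' (n j : ℕ) (hj : j ≤ n) {α : Type*} (g : ℕ → α) (i : ℕ) (hi : i ≤ n) :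
    rot (n + 1) (j + 1) (rot (n + 1) n g) i = rot (n + 1) j g i := by
  unfold rot
  split_ifs <;> first | omega | (congr 1 <;> omega)

theorem fc_rot1 (N J p : ℕ) (h : J + p ≤ N) (hJ : 1 ≤ J) (g : ℕ → A) (i : ℕ) (hi : i < N) :
    fc p (rot (N + 1) J g) i = rot N J (fcN N (J + p) g) i := by
  unfold fcN
  split_ifs with hN
  · unfold fc rot
    dsimp only
    split_ifs <;> first | omega | (congr 1 <;> omega) | (congr 2 <;> omega)
  · unfold fc rot cy
    split_ifs <;> first | omega | (congr 1 <;> omega) | (congr 2 <;> omega)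

theorem fc_rot2 (N J p : ℕ) (h : N < J + p) (hJ : J ≤ N + 1) (hp : p < N) (g : ℕ → A) (i : ℕ)
    (hi : i < N) :
    fc p (rot (N + 1) J g) i = rot N (J - 1) (fcN N (J + p - N - 1) g) i := by
  unfold fcN
  rw [if_pos (by omega)]
  unfold fc rot
  dsimp only
  split_ifs <;> first | omega | (congr 1 <;> omega) | (congr 2 <;> omega)

theorem sgn_eq {a b : ℕ} (h : (a + b) % 2 = 0) : (-1 : ℤ) ^ a = (-1) ^ b := by
  rcases Nat.even_or_odd a with ha | ha <;> rcases Nat.even_or_odd b with hb | hb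
  · rw [ha.neg_one_pow, hb.neg_one_pow]
  · rw [Nat.even_iff] at ha; rw [Nat.odd_iff] at hb; omega
  · rw [Nat.odd_iff] at ha; rw [Nat.even_iff] at hb; omega
  · rw [ha.neg_one_pow, hb.neg_one_pow]

theorem lemE (n : ℕ) (g : ℕ → A) (d : ℕ → ℕ) :
    ∑ q ∈ range (n + 2), ∑ j ∈ range (n + 1), ((-1 : ℤ) ^ (q + (j + 1) * n) *
      ((if q = 0 then (d 1 : ℤ) else 0) + W (fcNd (n + 1) q d) j)) •
        Y k (n + 1) (rot (n + 1) (j + 1) (fcN (n + 1) q g)) =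
    ∑ j ∈ range (n + 2), ∑ p ∈ range (n + 1), ((-1 : ℤ) ^ ((j + 1) * (n + 1) + p) * W d j) •
      Y k (n + 1) (fc p (rot (n + 2) (j + 1) g)) := by
  rw [← Finset.sum_product', ← Finset.sum_product']
  refine Finset.sum_nbij'
    (fun x => if x.2 < x.1 then (x.2, x.1 - x.2 - 1) else (x.2 + 1, x.1 + n - x.2))
    (fun y => if y.1 + y.2 ≤ n then (y.1 + 1 + y.2, y.1) else (y.1 + y.2 - n - 1, y.1 - 1))
    ?_ ?_ ?_ ?_ ?_
  · rintro ⟨q, j⟩ h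
    simp only [Finset.mem_product, Finset.mem_range] at h ⊢
    split_ifs <;> (dsimp only; omega)
  · rintro ⟨q, j⟩ h
    simp only [Finset.mem_product, Finset.mem_range] at h ⊢
    split_ifs <;> (dsimp only; omega)
  · rintro ⟨q, j⟩ h
    simp only [Finset.mem_product, Finset.mem_range] at h ⊢
    by_cases hq : j < q
    · simp only [hq, if_true]
      rw [if_pos (by omega)]
      exact Prod.ext (by dsimp only; omega) rfl
    · simp only [hq, if_false]
      rw [if_neg (by omega)]
      exact Prod.ext (by dsimp only; omega) (by dsimp only; omega)
  · rintro ⟨j, p⟩ h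
    simp only [Finset.mem_product, Finset.mem_range] at h ⊢
    by_cases hq : j + p ≤ n
    · simp only [hq, if_true]
      rw [if_pos (by omega)]
      exact Prod.ext rfl (by dsimp only; omega)
    · simp only [hq, if_false]
      rw [if_neg (by omega)]
      exact Prod.ext (by dsimp only; omega) (by dsimp only; omega)
  · rintro ⟨q, j⟩ h
    simp only [Finset.mem_product, Finset.mem_range] at h ⊢
    rw [W_fcNd (n + 1) q j h.2]
    split_ifs with hq
    · dsimp only
      congr 1
      · congr 1
        apply sgn_eq
        have : q + (j + 1) * n + ((j + 1) * (n + 1) + (q - j - 1)) =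
          2 * ((j + 1) * n) + 2 * q := by
          have : (j + 1) * (n + 1) = (j + 1) * n + (j + 1) := by ring
          omega
        omega
      · apply Y_congr
        intro i hi
        rw [fc_rot1 (n + 1) (j + 1) (q - j - 1) (by omega) (by omega) g i hi]
        rw [show j + 1 + (q - j - 1) = q by omega]
    · dsimp only
      congr 1
      · congr 1
        apply sgn_eq
        have : q + (j + 1) * n + ((j + 1 + 1) * (n + 1) + (q + n - j)) =
          2 * ((j + 1) * n) + 2 * (q + n + 1) := by
          have : (j + 1 + 1) * (n + 1) = (j + 1) * n + (j + 1) + n + 1 := by ring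
          omega
        omega
      · apply Y_congr
        intro i hi
        rw [fc_rot2 (n + 1) (j + 1 + 1) (q + n - j) (by omega) (by omega) (by omega) g i hi]
        rw [show j + 1 + 1 + (q + n - j) - (n + 1) - 1 = q by omega, Nat.add_sub_cancel]

end cartan

section cartan2
variable {k : Type*} {A : Type*} [Field k] [Ring A] [Algebra k A]
  {𝒜 : ℕ → Submodule k A} [GradedAlgebra 𝒜] {D : A →ₗ[k] A}
  {b : ∀ n : ℕ, CycChain k A (n + 1) →ₗ[k] CycChain k A n}
  {B : ∀ n : ℕ, CycChain k A n →ₗ[k] CycChain k A (n + 1)}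

theorem b_X' (hb : ∀ (n : ℕ) (a₀ : Unitization k A) (f : ℕ → A),
      b n (elemC k A (n + 1) a₀ f) = bElemF k A n a₀ f) (n : ℕ) (g : ℕ → A) :
    b n (X k (n + 1) g) = ∑ q ∈ range (n + 2), ((-1 : ℤ) ^ q) • X k n (fcN (n + 1) q g) := by
  rw [b_X hb, Finset.sum_range_succ _ (n + 1)]
  congr 1
  · refine Finset.sum_congr rfl fun j hj => ?_
    rw [fcN, if_pos (Finset.mem_range.mp hj)]
  · rw [fcN, if_neg (lt_irrefl _)]

theorem sopX (hD : ∀ n : ℕ, ∀ a ∈ 𝒜 n, D a = (n : ℤ) • a) {g : ℕ → A} {d : ℕ → ℕ}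
    (hg : Hom 𝒜 g d) (n : ℕ) : Sop D n (X k n g) = ∑ j ∈ range (n + 1),
      ((-1 : ℤ) ^ ((j + 1) * n) * W d j) • Y k (n + 1) (rot (n + 1) (j + 1) g) :=
  Sop_X hD hg n

theorem bS_X (hD : ∀ n : ℕ, ∀ a ∈ 𝒜 n, D a = (n : ℤ) • a) {g : ℕ → A} {d : ℕ → ℕ}
    (hg : Hom 𝒜 g d) (hb : ∀ (n : ℕ) (a₀ : Unitization k A) (f : ℕ → A),
      b n (elemC k A (n + 1) a₀ f) = bElemF k A n a₀ f) (n : ℕ) :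
    b n (Sop D n (X k n g)) =
      ∑ j ∈ range (n + 1), (W d j) • (((-1 : ℤ) ^ ((j + 1) * n)) • X k n (rot (n + 1) (j + 1) g)
        - ((-1 : ℤ) ^ (j * n)) • X k n (rot (n + 1) j g))
      - ∑ j ∈ range (n + 1), ∑ p ∈ range n, ((-1 : ℤ) ^ ((j + 1) * n + p) * W d j) •
        Y k n (fc p (rot (n + 1) (j + 1) g)) := by
  rw [sopX hD hg, map_sum, ← Finset.sum_sub_distrib]
  refine Finset.sum_congr rfl fun j hj => ?_
  rw [Finset.mem_range] at hj
  rw [map_zsmul, b_Y hb]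
  have h1 : X k n (rot (n + 1) n (rot (n + 1) (j + 1) g)) = X k n (rot (n + 1) j g) :=
    X_congr fun i hi => rot_rot n j (by omega) g i hi
  have h2 : ∑ p ∈ range n, ((-1 : ℤ) ^ ((j + 1) * n + p) * W d j) •
        Y k n (fc p (rot (n + 1) (j + 1) g)) = ((-1 : ℤ) ^ ((j + 1) * n) * W d j) •
        ∑ p ∈ range n, ((-1 : ℤ) ^ p) • Y k n (fc p (rot (n + 1) (j + 1) g)) := by
    rw [Finset.smul_sum]
    refine Finset.sum_congr rfl fun p _ => ?_
    rw [smul_smul]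
    congr 1
    rw [pow_add]; ring
  have h3 : (-1 : ℤ) ^ (j * n) = (-1 : ℤ) ^ ((j + 1) * n) * (-1) ^ n := by
    rw [← pow_add]
    apply sgn_eq
    have : j * n + ((j + 1) * n + n) = 2 * (j * n) + 2 * n := by ring
    omega
  rw [h1, h2, h3]
  generalize ∑ p ∈ range n, ((-1 : ℤ) ^ p) • Y k n (fc p (rot (n + 1) (j + 1) g)) = z
  generalize (-1 : ℤ) ^ ((j + 1) * n) = s
  module

theorem telC {M : Type*} [AddCommGroup M] (d : ℕ → ℕ) (F : ℕ → M) (n : ℕ) :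
    ∑ j ∈ range (n + 1), ((d j : ℤ) • F j + W d j • (F (j + 1) - F j)) =
      (d 0 : ℤ) • F 0 + W d n • F (n + 1) := by
  induction n with
  | zero => simp [W_zero]
  | succ n ih =>
    rw [Finset.sum_range_succ, ih, W_succ]
    module

theorem lemC (hD : ∀ n : ℕ, ∀ a ∈ 𝒜 n, D a = (n : ℤ) • a) {g : ℕ → A} {d : ℕ → ℕ}
    (hg : Hom 𝒜 g d) (hB : ∀ (n : ℕ) (a₀ : Unitization k A) (f : ℕ → A),
      B n (elemC k A n a₀ f) = BElemF k A n a₀ f) (n : ℕ) :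
    iop D n (B n (X k n g)) +
      ∑ j ∈ range (n + 1), (W d j) • (((-1 : ℤ) ^ ((j + 1) * n)) • X k n (rot (n + 1) (j + 1) g)
        - ((-1 : ℤ) ^ (j * n)) • X k n (rot (n + 1) j g)) = Lop D n (X k n g) := by
  have h1 : iop D n (B n (X k n g)) = ∑ j ∈ range (n + 1),
      (d j : ℤ) • (((-1 : ℤ) ^ (j * n)) • X k n (rot (n + 1) j g)) := by
    rw [B_X hB, map_sum]
    refine Finset.sum_congr rfl fun j hj => ?_
    rw [Finset.mem_range] at hj
    rw [map_zsmul, iop_Y hD (hom_rot hg _ _), smul_comm]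
    congr 2
    simp [rot, hj]
  rw [h1, ← Finset.sum_add_distrib,
    telC d (fun j => ((-1 : ℤ) ^ (j * n)) • X k n (rot (n + 1) j g)), Lop_X hD hg]
  have h2 : (-1 : ℤ) ^ ((n + 1) * n) = 1 := by
    rw [mul_comm]; exact Even.neg_one_pow (Nat.even_mul_succ_self n)
  have h3 : X k n (rot (n + 1) 0 g) = X k n g :=
    X_congr fun i hi => rot_zero _ _ _ (by omega)
  have h4 : X k n (rot (n + 1) (n + 1) g) = X k n g :=
    X_congr fun i hi => rot_full _ _ _
  rw [h2, h3, h4, Finset.sum_range_succ', zero_mul, pow_zero]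
  unfold W
  module


/-- Cartan in degree zero. -/
theorem cartan0 (hD : ∀ n : ℕ, ∀ a ∈ 𝒜 n, D a = (n : ℤ) • a)
    (hb : ∀ (n : ℕ) (a₀ : Unitization k A) (f : ℕ → A),
      b n (elemC k A (n + 1) a₀ f) = bElemF k A n a₀ f)
    (hB : ∀ (n : ℕ) (a₀ : Unitization k A) (f : ℕ → A),
      B n (elemC k A n a₀ f) = BElemF k A n a₀ f) (x : CycChain k A 0) :
    b 0 (Sop D 0 x) + iop D 0 (B 0 x) = Lop D 0 x := by
  suffices h : b 0 ∘ₗ Sop D 0 + iop D 0 ∘ₗ B 0 = Lop D 0 from LinearMap.congr_fun h x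
  refine ext_hom 𝒜 ?_ ?_
  · intro g d hg
    simp only [LinearMap.add_apply, LinearMap.comp_apply]
    rw [bS_X hD hg hb, ← lemC hD hg hB]
    simp only [Finset.sum_range_zero, Finset.sum_const_zero, sub_zero]
    rw [add_comm]
  · intro g d hg
    simp only [LinearMap.add_apply, LinearMap.comp_apply]
    rw [Sop_Y hD hg, B_Y hB, Lop_Y hD hg]
    simp

theorem telD {M : Type*} [AddCommGroup M] (V : ℕ → ℤ) (F : ℕ → M) (n : ℕ) :
    ∑ j ∈ range n, (V (j + 1) • F (j + 1) - V j • F j) = V n • F n - V 0 • F 0 := by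
  rw [Finset.sum_range_sub (fun j => V j • F j)]

/-- Cartan in positive degree. -/
theorem cartan1 (hD : ∀ n : ℕ, ∀ a ∈ 𝒜 n, D a = (n : ℤ) • a)
    (hb : ∀ (n : ℕ) (a₀ : Unitization k A) (f : ℕ → A),
      b n (elemC k A (n + 1) a₀ f) = bElemF k A n a₀ f)
    (hB : ∀ (n : ℕ) (a₀ : Unitization k A) (f : ℕ → A),
      B n (elemC k A n a₀ f) = BElemF k A n a₀ f) (n : ℕ) (x : CycChain k A (n + 1)) :
    b (n + 1) (Sop D (n + 1) x) + iop D (n + 1) (B (n + 1) x) + B n (iop D n x) +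
      Sop D n (b n x) = Lop D (n + 1) x := by
  suffices h : b (n + 1) ∘ₗ Sop D (n + 1) + iop D (n + 1) ∘ₗ B (n + 1) + B n ∘ₗ iop D n +
      Sop D n ∘ₗ b n = Lop D (n + 1) from LinearMap.congr_fun h x
  refine ext_hom 𝒜 ?_ ?_
  · intro g d hg
    simp only [LinearMap.add_apply, LinearMap.comp_apply]
    rw [bS_X hD hg hb, ← lemC hD hg hB, ← lemE n g d]
    have h1 : B n (iop D n (X k (n + 1) g)) + Sop D n (b n (X k (n + 1) g)) =
      ∑ q ∈ range (n + 2), ∑ j ∈ range (n + 1), ((-1 : ℤ) ^ (q + (j + 1) * n) *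
      ((if q = 0 then (d 1 : ℤ) else 0) + W (fcNd (n + 1) q d) j)) •
        Y k (n + 1) (rot (n + 1) (j + 1) (fcN (n + 1) q g)) := by
      simp only [mul_add, add_smul, Finset.sum_add_distrib]
      congr 1
      · refine Eq.trans ?_ (Finset.sum_eq_single_of_mem 0
          (Finset.mem_range.mpr (by omega)) ?_).symm
        · rw [iop_X hD hg, map_zsmul, B_X' hB, Finset.smul_sum]
          refine Finset.sum_congr rfl fun j _ => ?_
          rw [smul_smul]
          congr 1
          simp [mul_comm]
        · intro q _ hq
          exact Finset.sum_eq_zero fun j _ => by simp [hq]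
      · rw [b_X' hb, map_sum]
        refine Finset.sum_congr rfl fun q _ => ?_
        rw [map_zsmul, sopX hD (hom_fcN hg _ _), Finset.smul_sum]
        refine Finset.sum_congr rfl fun j _ => ?_
        rw [smul_smul, pow_add, mul_assoc]
    rw [← h1]
    abel
  · intro g d hg
    simp only [LinearMap.add_apply, LinearMap.comp_apply]
    rw [Sop_Y hD hg, B_Y hB, map_zero, map_zero, Lop_Y hD hg, iop_Y hD hg, map_zsmul, b_Y hb,
      map_sub, map_sub, map_sum, map_zsmul, sopX hD hg, sopX hD (hom_rot hg _ _), B_X' hB,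
      Finset.sum_eq_zero (s := range n)]
    swap
    · intro j _
      rw [map_zsmul, Sop_Y hD (hom_fc hg j), smul_zero]
    rw [Finset.smul_sum, Finset.smul_sum, sub_zero, zero_add, zero_add, ← Finset.sum_sub_distrib,
      ← Finset.sum_add_distrib]
    have key := telD (fun j => ∑ l ∈ range j, (d l : ℤ))
      (fun j => ((-1 : ℤ) ^ (j * n)) • Y k (n + 1) (rot (n + 1) j g)) (n + 1)
    have h2 : (-1 : ℤ) ^ ((n + 1) * n) = 1 := by
      rw [mul_comm]; exact Even.neg_one_pow (Nat.even_mul_succ_self n)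
    have h4 : Y k (n + 1) (rot (n + 1) (n + 1) g) = Y k (n + 1) g :=
      Y_congr fun i hi => rot_full _ _ _
    simp only [h2, h4, one_smul, Finset.sum_range_zero, zero_smul, sub_zero] at key
    rw [← key]
    refine Finset.sum_congr rfl fun j hj => ?_
    rw [Finset.mem_range] at hj
    have h5 : Y k (n + 1) (rot (n + 1) (j + 1) (rot (n + 1) n g)) = Y k (n + 1) (rot (n + 1) j g) :=
      Y_congr fun i hi => rot_rot' n j (by omega) g i (by omega)
    have h6 : W (rot (n + 1) n d) j = ∑ l ∈ range j, (d l : ℤ) := by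
      unfold W
      refine Finset.sum_congr rfl fun l hl => ?_
      rw [Finset.mem_range] at hl
      unfold rot
      rw [if_neg (by omega), show n + (l + 1) - (n + 1) = l by omega]
    have h3 : (-1 : ℤ) ^ (j * n) = (-1) ^ n * (-1 : ℤ) ^ ((j + 1) * n) := by
      rw [← pow_add]
      apply sgn_eq
      have : j * n + (n + (j + 1) * n) = 2 * (j * n) + 2 * n := by ring
      omega
    rw [h5, h6, h3, Finset.sum_range_succ' (fun l => (d l : ℤ)) j]
    unfold W
    module

theorem cartanSB (hD : ∀ n : ℕ, ∀ a ∈ 𝒜 n, D a = (n : ℤ) • a)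
    (hB : ∀ (n : ℕ) (a₀ : Unitization k A) (f : ℕ → A),
      B n (elemC k A n a₀ f) = BElemF k A n a₀ f) (n : ℕ) (x : CycChain k A n) :
    Sop D (n + 1) (B n x) = 0 := by
  suffices h : Sop D (n + 1) ∘ₗ B n = 0 from LinearMap.congr_fun h x
  refine ext_hom 𝒜 ?_ ?_
  · intro g d hg
    simp only [LinearMap.zero_apply, LinearMap.comp_apply]
    rw [B_X hB, map_sum]
    exact Finset.sum_eq_zero fun j _ => by
      rw [map_zsmul, Sop_Y hD (hom_rot hg _ _), smul_zero]
  · intro g d hg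
    simp only [LinearMap.zero_apply, LinearMap.comp_apply]
    rw [B_Y hB, map_zero]

theorem cartanBS (hD : ∀ n : ℕ, ∀ a ∈ 𝒜 n, D a = (n : ℤ) • a)
    (hB : ∀ (n : ℕ) (a₀ : Unitization k A) (f : ℕ → A),
      B n (elemC k A n a₀ f) = BElemF k A n a₀ f) (n : ℕ) (x : CycChain k A n) :
    B (n + 1) (Sop D n x) = 0 := by
  suffices h : B (n + 1) ∘ₗ Sop D n = 0 from LinearMap.congr_fun h x
  refine ext_hom 𝒜 ?_ ?_
  · intro g d hg
    simp only [LinearMap.zero_apply, LinearMap.comp_apply]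
    rw [sopX hD hg, map_sum]
    exact Finset.sum_eq_zero fun j _ => by
      rw [map_zsmul, B_Y hB, smul_zero]
  · intro g d hg
    simp only [LinearMap.zero_apply, LinearMap.comp_apply]
    rw [Sop_Y hD hg, map_zero]

theorem fc_fc (q : ℕ) (g : ℕ → A) (i : ℕ) : fc q (fc 0 g) i = fc 0 (fc (q + 1) g) i := by
  unfold fc
  rcases Nat.eq_zero_or_pos q with rfl | hq
  · rcases Nat.eq_zero_or_pos i with rfl | hi
    · simp [mul_assoc]
    · simp [show i ≠ 0 by omega]
  · split_ifs <;> first | contradiction | omega | rfl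

theorem cartan_i (hD : ∀ n : ℕ, ∀ a ∈ 𝒜 n, D a = (n : ℤ) • a)
    (hb : ∀ (n : ℕ) (a₀ : Unitization k A) (f : ℕ → A),
      b n (elemC k A (n + 1) a₀ f) = bElemF k A n a₀ f) (n : ℕ) (x : CycChain k A (n + 2)) :
    b n (iop D (n + 1) x) + iop D n (b (n + 1) x) = 0 := by
  suffices h : b n ∘ₗ iop D (n + 1) + iop D n ∘ₗ b (n + 1) = 0 from LinearMap.congr_fun h x
  refine ext_hom 𝒜 ?_ ?_
  · intro g d hg
    simp only [LinearMap.zero_apply, LinearMap.comp_apply, LinearMap.add_apply]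
    rw [iop_X hD hg, map_zsmul, b_X hb, b_X hb, map_add, map_sum, map_zsmul,
      iop_X hD (hom_cy hg _), Finset.sum_range_succ' _ (n + 1), Finset.sum_range_succ' _ n,
      Finset.sum_range_succ' _ n, map_zsmul, map_zsmul, iop_X hD (hom_fc hg _),
      iop_X hD (hom_fc hg _)]
    have h1 : ∑ q ∈ range n, iop D n (((-1 : ℤ) ^ (q + 1 + 1)) • X k (n + 1) (fc (q + 1 + 1) g)) =
        - ((d 1 : ℤ) • ∑ q ∈ range n, ((-1 : ℤ) ^ (q + 1)) • X k n (fc (q + 1) (fc 0 g))) := by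
      rw [Finset.smul_sum, ← Finset.sum_neg_distrib]
      refine Finset.sum_congr rfl fun q _ => ?_
      have : X k n (fc (q + 1) (fc 0 g)) = X k n (fc 0 (fc (q + 1 + 1) g)) :=
        X_congr fun i _ => fc_fc _ _ _
      rw [map_zsmul, iop_X hD (hom_fc hg _), this]
      have h0 : fcd (q + 1 + 1) d 1 = d 1 := by simp [fcd]
      rw [h0, pow_succ _ (q + 1)]
      module
    have h2 : X k n (fc 0 (fc (0 + 1) g)) = X k n (fc 0 (fc 0 g)) :=
      X_congr fun i _ => (fc_fc 0 _ _).symm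
    have h3 : X k n (fc 0 (cy (n + 1 + 1) g)) = X k n (cy (n + 1) (fc 0 g)) :=
      X_congr fun i _ => by
        unfold fc cy
        rcases Nat.eq_zero_or_pos i with rfl | hi
        · simp [mul_assoc]
        · simp [show i ≠ 0 by omega]
    have h4 : (fcd (0 + 1) d 1 : ℤ) = d 1 + d 2 := by simp [fcd]
    have h5 : (fcd 0 d 1 : ℤ) = d 2 := by simp [fcd]
    have h6 : (cyd (n + 1 + 1) d 1 : ℤ) = d 1 := by simp [cyd]
    rw [h1, h2, h3, h4, h5, h6, pow_succ _ (n + 1)]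
    generalize ∑ q ∈ range n, ((-1 : ℤ) ^ (q + 1)) • X k n (fc (q + 1) (fc 0 g)) = z
    module
  · intro g d hg
    simp only [LinearMap.zero_apply, LinearMap.comp_apply, LinearMap.add_apply]
    rw [iop_Y hD hg, map_zsmul, b_X hb, b_Y hb, map_sub, map_sub, map_sum, map_zsmul,
      iop_X hD hg, iop_X hD (hom_rot hg _ _), Finset.sum_range_succ' _ n,
      Finset.sum_range_succ' _ n, map_zsmul, iop_Y hD (hom_fc hg _)]
    have h1 : ∑ q ∈ range n, iop D n (((-1 : ℤ) ^ (q + 1)) • Y k (n + 1) (fc (q + 1) g)) =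
        (d 0 : ℤ) • ∑ q ∈ range n, ((-1 : ℤ) ^ (q + 1)) • X k n (fc (q + 1) g) := by
      rw [Finset.smul_sum]
      refine Finset.sum_congr rfl fun q _ => ?_
      rw [map_zsmul, iop_Y hD (hom_fc hg _)]
      have h0 : fcd (q + 1) d 0 = d 0 := by simp [fcd]
      rw [h0]
      module
    have h3 : X k n (fc 0 (rot (n + 1 + 1) (n + 1) g)) = X k n (cy (n + 1) g) :=
      X_congr fun i _ => by
        unfold fc cy rot
        rcases Nat.eq_zero_or_pos i with rfl | hi
        · simp
        · simp [show i ≠ 0 by omega]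
          congr 1; omega
    have h4 : (fcd 0 d 0 : ℤ) = d 0 + d 1 := by simp [fcd]
    have h5 : ((rot (n + 1 + 1) (n + 1) d 1 : ℕ) : ℤ) = d 0 := by simp [rot]
    rw [h1, h3, h4, h5, pow_succ _ n]
    generalize ∑ q ∈ range n, ((-1 : ℤ) ^ (q + 1)) • X k n (fc (q + 1) g) = z
    module

end cartan2

section homotopy
variable {k : Type*} {A : Type*} [Field k] [Ring A] [Algebra k A]

theorem exists_G {V : Type*} [AddCommGroup V] [Module k V] (L : Module.End k V)
    (h : ⨆ μ, L.eigenspace μ = ⊤) :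
    ∃ G : V →ₗ[k] V, ∀ (μ : k) (x : V), L x = μ • x → G x = μ⁻¹ • x := by
  classical
  have hi := DirectSum.isInternal_submodule_of_iSupIndep_of_iSup_eq_top L.eigenspaces_iSupIndep h
  let e := LinearEquiv.ofBijective (DirectSum.coeLinearMap L.eigenspace) hi
  refine ⟨DirectSum.toModule k k V (fun μ => μ⁻¹ • (L.eigenspace μ).subtype) ∘ₗ
    e.symm.toLinearMap, fun μ x hx => ?_⟩
  have h1 : e.symm x = DirectSum.lof k k (fun μ => L.eigenspace μ) μ
      ⟨x, Module.End.mem_eigenspace_iff.mpr hx⟩ := by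
    rw [LinearEquiv.symm_apply_eq]
    change x = DirectSum.coeLinearMap L.eigenspace _
    rw [DirectSum.coeLinearMap_lof]
  rw [LinearMap.comp_apply, LinearEquiv.coe_coe, h1, DirectSum.toModule_lof]
  rfl

theorem Lop_top {𝒜 : ℕ → Submodule k A} [GradedAlgebra 𝒜] {D : A →ₗ[k] A}
    (hD : ∀ n : ℕ, ∀ a ∈ 𝒜 n, D a = (n : ℤ) • a) (n : ℕ) :
    ⨆ μ, Module.End.eigenspace (Lop D n : Module.End k (CycChain k A n)) μ = ⊤ := by
  set T := ⨆ μ, Module.End.eigenspace (Lop D n : Module.End k (CycChain k A n)) μ with hT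
  have key : ∀ (x : CycChain k A n) (m : ℤ), Lop D n x = m • x → T.mkQ x = 0 := by
    intro x m hx
    rw [Submodule.mkQ_apply, Submodule.Quotient.mk_eq_zero]
    refine Submodule.mem_iSup_of_mem (m : k) ?_
    rw [Module.End.mem_eigenspace_iff, hx, Int.cast_smul_eq_zsmul]
  have h : T.mkQ = 0 := ext_hom 𝒜 (fun g d hg => key _ _ (Lop_X hD hg n))
    (fun g d hg => key _ _ (Lop_Y hD hg n))
  rw [← Submodule.ker_mkQ T, h, LinearMap.ker_zero]

/-- The weight inverse operator. -/
theorem exists_G' {𝒜 : ℕ → Submodule k A} [GradedAlgebra 𝒜] {D : A →ₗ[k] A}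
    (hD : ∀ n : ℕ, ∀ a ∈ 𝒜 n, D a = (n : ℤ) • a) :
    ∃ G : ∀ n : ℕ, CycChain k A n →ₗ[k] CycChain k A n,
      (∀ n g d, Hom 𝒜 g d → G n (X k n g) =
        (((∑ l ∈ range (n + 1), (d l : ℤ) : ℤ) : k))⁻¹ • X k n g) ∧
      (∀ n g d, Hom 𝒜 g d → G n (Y k n g) =
        (((∑ l ∈ range n, (d l : ℤ) : ℤ) : k))⁻¹ • Y k n g) := by
  choose G hG using fun n => exists_G _ (Lop_top (𝒜 := 𝒜) hD n)
  refine ⟨G, fun n g d hg => hG _ _ _ ?_, fun n g d hg => hG _ _ _ ?_⟩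
  · rw [Int.cast_smul_eq_zsmul]; exact Lop_X hD hg n
  · rw [Int.cast_smul_eq_zsmul]; exact Lop_Y hD hg n

section comm
variable {𝒜 : ℕ → Submodule k A} [GradedAlgebra 𝒜]
  {b : ∀ n : ℕ, CycChain k A (n + 1) →ₗ[k] CycChain k A n}
  {B : ∀ n : ℕ, CycChain k A n →ₗ[k] CycChain k A (n + 1)}
  {G : ∀ n : ℕ, CycChain k A n →ₗ[k] CycChain k A n}

theorem G_b (hb : ∀ (n : ℕ) (a₀ : Unitization k A) (f : ℕ → A),
      b n (elemC k A (n + 1) a₀ f) = bElemF k A n a₀ f)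
    (hGX : ∀ n g d, Hom 𝒜 g d → G n (X k n g) =
        (((∑ l ∈ range (n + 1), (d l : ℤ) : ℤ) : k))⁻¹ • X k n g)
    (hGY : ∀ n g d, Hom 𝒜 g d → G n (Y k n g) =
        (((∑ l ∈ range n, (d l : ℤ) : ℤ) : k))⁻¹ • Y k n g) (n : ℕ) (x : CycChain k A (n + 1)) :
    G n (b n x) = b n (G (n + 1) x) := by
  suffices h : G n ∘ₗ b n = b n ∘ₗ G (n + 1) from LinearMap.congr_fun h x
  refine ext_hom 𝒜 ?_ ?_
  · intro g d hg
    simp only [LinearMap.comp_apply]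
    rw [hGX _ _ _ hg, map_smul, b_X' hb, map_sum, Finset.smul_sum]
    refine Finset.sum_congr rfl fun q _ => ?_
    rw [map_zsmul, hGX _ _ _ (hom_fcN hg _ _), sum_fcNd _ _ (Nat.succ_pos _), smul_comm]
  · intro g d hg
    simp only [LinearMap.comp_apply]
    rw [hGY _ _ _ hg, map_smul, b_Y hb, map_sub, map_sub, map_sum, map_zsmul, hGX _ _ _ hg,
      hGX _ _ _ (hom_rot hg _ _), sum_rot _ _ (by omega), smul_sub, smul_sub, Finset.smul_sum,
      smul_comm _ ((-1 : ℤ) ^ n)]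
    congr 2
    refine Finset.sum_congr rfl fun q hq => ?_
    rw [Finset.mem_range] at hq
    rw [map_zsmul, hGY _ _ _ (hom_fc hg _), sum_fcd, if_neg (by omega), smul_comm]

theorem G_B (hB : ∀ (n : ℕ) (a₀ : Unitization k A) (f : ℕ → A),
      B n (elemC k A n a₀ f) = BElemF k A n a₀ f)
    (hGX : ∀ n g d, Hom 𝒜 g d → G n (X k n g) =
        (((∑ l ∈ range (n + 1), (d l : ℤ) : ℤ) : k))⁻¹ • X k n g)
    (hGY : ∀ n g d, Hom 𝒜 g d → G n (Y k n g) =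
        (((∑ l ∈ range n, (d l : ℤ) : ℤ) : k))⁻¹ • Y k n g) (n : ℕ) (x : CycChain k A n) :
    G (n + 1) (B n x) = B n (G n x) := by
  suffices h : G (n + 1) ∘ₗ B n = B n ∘ₗ G n from LinearMap.congr_fun h x
  refine ext_hom 𝒜 ?_ ?_
  · intro g d hg
    simp only [LinearMap.comp_apply]
    rw [hGX _ _ _ hg, map_smul, B_X hB, map_sum, Finset.smul_sum]
    refine Finset.sum_congr rfl fun q hq => ?_
    rw [Finset.mem_range] at hq
    rw [map_zsmul, hGY _ _ _ (hom_rot hg _ _), sum_rot _ _ (by omega), smul_comm]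
  · intro g d hg
    simp only [LinearMap.comp_apply]
    rw [hGY _ _ _ hg, map_smul, B_Y hB, map_zero, smul_zero]

end comm

section funct
variable {A' : Type*} [Ring A'] [Algebra k A']

/-- Induced map on unitizations. -/
noncomputable def Um (φ : A →ₐ[k] A') : Unitization k A →ₗ[k] Unitization k A' where
  toFun a := Unitization.inl a.fst + Unitization.inr (φ a.snd)
  map_add' a b := by ext <;> simp
  map_smul' c a := by ext <;> simp

theorem Um_mul (φ : A →ₐ[k] A') (a b : Unitization k A) : Um φ (a * b) = Um φ a * Um φ b := by
  unfold Um
  ext <;> simp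

theorem Um_inr (φ : A →ₐ[k] A') (a : A) : Um φ (Unitization.inr a) = Unitization.inr (φ a) := by
  unfold Um
  ext <;> simp

theorem Um_one (φ : A →ₐ[k] A') : Um φ 1 = 1 := by
  unfold Um
  ext <;> simp

theorem Um_snd (φ : A →ₐ[k] A') (a : Unitization k A) : (Um φ a).snd = φ a.snd := by
  simp [Um]

/-- Induced map on chains. -/
noncomputable def Fm (φ : A →ₐ[k] A') (n : ℕ) : CycChain k A n →ₗ[k] CycChain k A' n :=
  TensorProduct.map (Um φ) (PiTensorProduct.map fun _ => φ.toLinearMap)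

theorem Fm_elem (φ : A →ₐ[k] A') (n : ℕ) (a : Unitization k A) (f : ℕ → A) :
    Fm φ n (elemC k A n a f) = elemC k A' n (Um φ a) (fun i => φ (f i)) := by
  unfold Fm elemC
  rw [TensorProduct.map_tmul, PiTensorProduct.map_tprod]
  rfl

variable {b : ∀ n : ℕ, CycChain k A (n + 1) →ₗ[k] CycChain k A n}
  {B : ∀ n : ℕ, CycChain k A n →ₗ[k] CycChain k A (n + 1)}
  {b' : ∀ n : ℕ, CycChain k A' (n + 1) →ₗ[k] CycChain k A' n}
  {B' : ∀ n : ℕ, CycChain k A' n →ₗ[k] CycChain k A' (n + 1)}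

theorem Fm_b (φ : A →ₐ[k] A') (hb : ∀ (n : ℕ) (a₀ : Unitization k A) (f : ℕ → A),
      b n (elemC k A (n + 1) a₀ f) = bElemF k A n a₀ f)
    (hb' : ∀ (n : ℕ) (a₀ : Unitization k A') (f : ℕ → A'),
      b' n (elemC k A' (n + 1) a₀ f) = bElemF k A' n a₀ f) (n : ℕ) (x : CycChain k A (n + 1)) :
    Fm φ n (b n x) = b' n (Fm φ (n + 1) x) := by
  suffices h : Fm φ n ∘ₗ b n = b' n ∘ₗ Fm φ (n + 1) from LinearMap.congr_fun h x
  refine ext_elem fun a f => ?_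
  simp only [LinearMap.comp_apply]
  rw [Fm_elem, hb, hb', bElemF, bElemF, map_add, map_add, map_sum, map_zsmul, Fm_elem, Fm_elem,
    Um_mul, Um_mul, Um_inr, Um_inr]
  congr 2
  refine Finset.sum_congr rfl fun j _ => ?_
  rw [map_zsmul, Fm_elem]
  congr 1
  apply elemC_congr
  intro i _
  split_ifs
  · rfl
  · exact map_mul _ _ _
  · rfl

theorem Fm_B (φ : A →ₐ[k] A') (hB : ∀ (n : ℕ) (a₀ : Unitization k A) (f : ℕ → A),
      B n (elemC k A n a₀ f) = BElemF k A n a₀ f)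
    (hB' : ∀ (n : ℕ) (a₀ : Unitization k A') (f : ℕ → A'),
      B' n (elemC k A' n a₀ f) = BElemF k A' n a₀ f) (n : ℕ) (x : CycChain k A n) :
    Fm φ (n + 1) (B n x) = B' n (Fm φ n x) := by
  suffices h : Fm φ (n + 1) ∘ₗ B n = B' n ∘ₗ Fm φ n from LinearMap.congr_fun h x
  refine ext_elem fun a f => ?_
  simp only [LinearMap.comp_apply]
  rw [Fm_elem, hB, hB', BElemF, BElemF, map_sum]
  refine Finset.sum_congr rfl fun j _ => ?_
  rw [map_zsmul, Fm_elem, Um_one]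
  congr 1
  apply elemC_congr
  intro i _
  dsimp only
  rw [Um_snd]
  split_ifs <;> rfl

end funct

section proj
variable (𝒜 : ℕ → Submodule k A) [GradedAlgebra 𝒜]

/-- The projection onto the degree zero part. -/
noncomputable def pr : A →ₐ[k] degZeroSubalgebra 𝒜 :=
  AlgHom.codRestrict
    { GradedRing.projZeroRingHom 𝒜 with
      commutes' := fun r => by
        change (DirectSum.decompose 𝒜 (algebraMap k A r) 0 : A) = algebraMap k A r
        exact DirectSum.decompose_of_mem_same 𝒜 ((degZeroSubalgebra 𝒜).algebraMap_mem r) }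
    (degZeroSubalgebra 𝒜) (fun a => (DirectSum.decompose 𝒜 a 0).2)

theorem pr_coe (a : A) : ((pr 𝒜 a : degZeroSubalgebra 𝒜) : A) = DirectSum.decompose 𝒜 a 0 := rfl

theorem pr_same {a : A} (h : a ∈ 𝒜 0) : ((pr 𝒜 a : degZeroSubalgebra 𝒜) : A) = a := by
  rw [pr_coe]; exact DirectSum.decompose_of_mem_same 𝒜 h

theorem pr_ne {a : A} {d : ℕ} (h : a ∈ 𝒜 d) (hd : d ≠ 0) :
    ((pr 𝒜 a : degZeroSubalgebra 𝒜) : A) = 0 := by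
  rw [pr_coe]; exact DirectSum.decompose_of_mem_ne 𝒜 h hd

theorem Fm_X (φ : A →ₐ[k] A) (n : ℕ) (g : ℕ → A) :
    Fm φ n (X k n g) = X k n (fun i => φ (g i)) := by
  unfold X; rw [Fm_elem, Um_inr]

theorem Fm_Y (φ : A →ₐ[k] A) (n : ℕ) (g : ℕ → A) :
    Fm φ n (Y k n g) = Y k n (fun i => φ (g i)) := by
  unfold Y; rw [Fm_elem, Um_one]

theorem Fm_comp {A' A'' : Type*} [Ring A'] [Algebra k A'] [Ring A''] [Algebra k A'']
    (ψ : A' →ₐ[k] A'') (φ : A →ₐ[k] A') (n : ℕ) (x : CycChain k A n) :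
    Fm ψ n (Fm φ n x) = Fm (ψ.comp φ) n x := by
  suffices h : Fm ψ n ∘ₗ Fm φ n = Fm (ψ.comp φ) n from LinearMap.congr_fun h x
  refine ext_elem fun a f => ?_
  simp only [LinearMap.comp_apply]
  rw [Fm_elem, Fm_elem, Fm_elem]
  have : Um ψ (Um φ a) = Um (ψ.comp φ) a := by unfold Um; ext <;> simp
  rw [this]
  rfl

theorem Fm_id (φ : A →ₐ[k] A) (h : ∀ a, φ a = a) (n : ℕ) (x : CycChain k A n) :
    Fm φ n x = x := by
  suffices h : Fm φ n = LinearMap.id from LinearMap.congr_fun h x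
  refine ext_elem fun a f => ?_
  rw [Fm_elem, LinearMap.id_apply]
  have : Um φ a = a := by unfold Um; ext <;> simp [h]
  rw [this]
  simp only [h]

theorem Fm_pr_val (n : ℕ) (w : CycChain k (degZeroSubalgebra 𝒜) n) :
    Fm (pr 𝒜) n (Fm (degZeroSubalgebra 𝒜).val n w) = w := by
  rw [Fm_comp]
  refine Fm_id _ (fun a => ?_) n w
  exact Subtype.ext (pr_same 𝒜 a.2)

theorem X_zero_at {n : ℕ} (g : ℕ → A) (i : ℕ) (hi : i ≤ n) (h : g i = 0) : X k n g = 0 := by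
  unfold X
  cases i with
  | zero => simp [h, elemC]
  | succ i => exact elemC_zero_at _ _ i (by omega) h

theorem LG [CharZero k] {D : A →ₗ[k] A} (hD : ∀ n : ℕ, ∀ a ∈ 𝒜 n, D a = (n : ℤ) • a)
    {G : ∀ n : ℕ, CycChain k A n →ₗ[k] CycChain k A n}
    (hGX : ∀ n g d, Hom 𝒜 g d → G n (X k n g) =
        (((∑ l ∈ range (n + 1), (d l : ℤ) : ℤ) : k))⁻¹ • X k n g)
    (hGY : ∀ n g d, Hom 𝒜 g d → G n (Y k n g) =
        (((∑ l ∈ range n, (d l : ℤ) : ℤ) : k))⁻¹ • Y k n g) (n : ℕ) (x : CycChain k A n) :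
    Lop D n (G n x) = x - Fm (degZeroSubalgebra 𝒜).val n (Fm (pr 𝒜) n x) := by
  rw [Fm_comp]
  suffices h : Lop D n ∘ₗ G n = LinearMap.id - Fm ((degZeroSubalgebra 𝒜).val.comp (pr 𝒜)) n from
    LinearMap.congr_fun h x
  have hp : ∀ a, (degZeroSubalgebra 𝒜).val.comp (pr 𝒜) a =
    ((pr 𝒜 a : degZeroSubalgebra 𝒜) : A) := fun _ => rfl
  have hsum : ∀ (m : ℕ) (d : ℕ → ℕ), (∀ i < m, d i = 0) ∨
      ((∑ l ∈ range m, (d l : ℤ) : ℤ) : k) ≠ 0 ∧ ∃ i < m, d i ≠ 0 := by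
    intro m d
    by_cases h : ∀ i < m, d i = 0
    · exact Or.inl h
    · push Not at h
      refine Or.inr ⟨?_, h⟩
      obtain ⟨i, hi, hdi⟩ := h
      rw [Int.cast_ne_zero, ← Nat.cast_sum, Nat.cast_ne_zero]
      intro h0
      rw [Finset.sum_eq_zero_iff] at h0
      exact hdi (h0 i (Finset.mem_range.mpr hi))
  refine ext_hom 𝒜 ?_ ?_
  · intro g d hg
    simp only [LinearMap.comp_apply, LinearMap.sub_apply, LinearMap.id_apply]
    rw [hGX _ _ _ hg, map_smul, Lop_X hD hg, Fm_X, ← Int.cast_smul_eq_zsmul k, smul_smul]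
    rcases hsum (n + 1) d with h | ⟨h, i, hi, hdi⟩
    · have h1 : X k n (fun i => (degZeroSubalgebra 𝒜).val.comp (pr 𝒜) (g i)) = X k n g := by
        apply X_congr
        intro i hi
        rw [hp]
        apply pr_same
        have := hg i
        rwa [h i (by omega)] at this
      have h2 : ∑ l ∈ range (n + 1), (d l : ℤ) = 0 :=
        Finset.sum_eq_zero fun l hl => by rw [h l (Finset.mem_range.mp hl)]; rfl
      rw [h1, h2]
      simp
    · rw [inv_mul_cancel₀ h, one_smul, X_zero_at (fun i => (degZeroSubalgebra 𝒜).val.comp (pr 𝒜) (g i)) i (by omega)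
        (pr_ne 𝒜 (hg i) hdi), sub_zero]
  · intro g d hg
    simp only [LinearMap.comp_apply, LinearMap.sub_apply, LinearMap.id_apply]
    rw [hGY _ _ _ hg, map_smul, Lop_Y hD hg, Fm_Y, ← Int.cast_smul_eq_zsmul k, smul_smul]
    rcases hsum n d with h | ⟨h, i, hi, hdi⟩
    · have h1 : Y k n (fun i => (degZeroSubalgebra 𝒜).val.comp (pr 𝒜) (g i)) = Y k n g := by
        apply Y_congr
        intro i hi
        rw [hp]
        apply pr_same
        have := hg i
        rwa [h i (by omega)] at this
      have h2 : ∑ l ∈ range n, (d l : ℤ) = 0 :=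
        Finset.sum_eq_zero fun l hl => by rw [h l (Finset.mem_range.mp hl)]; rfl
      rw [h1, h2]
      simp
    · rw [inv_mul_cancel₀ h, one_smul, Y, Y,
        elemC_zero_at _ (fun i => (degZeroSubalgebra 𝒜).val.comp (pr 𝒜) (g i)) i hi
        (pr_ne 𝒜 (hg i) hdi), sub_zero]

end proj

section cx
variable {b : ∀ n : ℕ, CycChain k A (n + 1) →ₗ[k] CycChain k A n}
  {B : ∀ n : ℕ, CycChain k A n →ₗ[k] CycChain k A (n + 1)}
  {𝒜 : ℕ → Submodule k A} [GradedAlgebra 𝒜] {D : A →ₗ[k] A}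

theorem comb1 {M : Type*} [AddCommGroup M] {a b c d : M} (h : a + c = 0) :
    a + b + (c + d) = b + d := by
  rw [add_add_add_comm, h, zero_add]

theorem comb2 {M : Type*} [AddCommGroup M] {bi bS Bi ib iB Sb L : M}
    (h1 : bS + iB + Bi + Sb = L) (h2 : bi + ib = 0) :
    bi + bS + Bi + (ib + iB + Sb) = L := by
  rw [← h1, ← zero_add (bS + iB + Bi + Sb), ← h2]; abel

theorem comb4 {M : Type*} [AddCommGroup M] {bi bS Bi BS ib iB Sb SB L : M}
    (h1 : bS + iB + Bi + Sb = L) (h2 : bi + ib = 0) (h3 : SB = 0) (h4 : BS = 0) :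
    bi + bS + (Bi + BS) + (ib + iB + (Sb + SB)) = L := by
  rw [h3, h4, add_zero, add_zero]; exact comb2 h1 h2

/-- Cartan homotopy formula on even periodic chains. -/
theorem cartan_even (hD : ∀ n : ℕ, ∀ a ∈ 𝒜 n, D a = (n : ℤ) • a)
    (hb : ∀ (n : ℕ) (a₀ : Unitization k A) (f : ℕ → A),
      b n (elemC k A (n + 1) a₀ f) = bElemF k A n a₀ f)
    (hB : ∀ (n : ℕ) (a₀ : Unitization k A) (f : ℕ → A),
      B n (elemC k A n a₀ f) = BElemF k A n a₀ f)
    (x : ∀ n : ℕ, CycChain k A (2 * n)) (n : ℕ) :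
    dOE b B (dEO (iop D) (Sop D) x) n + dOE (iop D) (Sop D) (dEO b B x) n = Lop D (2 * n) (x n) := by
  cases n with
  | zero =>
    change b 0 (iop D 1 (x 1) + Sop D 0 (x 0)) + iop D 0 (b 1 (x 1) + B 0 (x 0)) = Lop D 0 (x 0)
    rw [← cartan0 hD hb hB (x 0), map_add, map_add]
    have h := cartan_i hD hb 0 (x 1)
    exact comb1 h
  | succ m =>
    change b (2 * m + 2) (iop D (2 * m + 3) (x (m + 2)) + Sop D (2 * m + 2) (x (m + 1))) +
      B (2 * m + 1) (iop D (2 * m + 1) (x (m + 1)) + Sop D (2 * m) (x m)) +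
      (iop D (2 * m + 2) (b (2 * m + 3) (x (m + 2)) + B (2 * m + 2) (x (m + 1))) +
      Sop D (2 * m + 1) (b (2 * m + 1) (x (m + 1)) + B (2 * m) (x m))) =
      Lop D (2 * m + 1 + 1) (x (m + 1))
    have h1 := cartan1 hD hb hB (2 * m + 1) (x (m + 1))
    have h2 := cartan_i hD hb (2 * m + 2) (x (m + 2))
    have h3 := cartanSB hD hB (2 * m) (x m)
    have h4 := cartanBS hD hB (2 * m) (x m)
    rw [map_add, map_add, map_add, map_add]
    exact comb4 h1 h2 h3 h4

/-- Cartan homotopy formula on odd periodic chains. -/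
theorem cartan_odd (hD : ∀ n : ℕ, ∀ a ∈ 𝒜 n, D a = (n : ℤ) • a)
    (hb : ∀ (n : ℕ) (a₀ : Unitization k A) (f : ℕ → A),
      b n (elemC k A (n + 1) a₀ f) = bElemF k A n a₀ f)
    (hB : ∀ (n : ℕ) (a₀ : Unitization k A) (f : ℕ → A),
      B n (elemC k A n a₀ f) = BElemF k A n a₀ f)
    (x : ∀ n : ℕ, CycChain k A (2 * n + 1)) (n : ℕ) :
    dEO b B (dOE (iop D) (Sop D) x) n + dEO (iop D) (Sop D) (dOE b B x) n =
      Lop D (2 * n + 1) (x n) := by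
  have h1 := cartan1 hD hb hB (2 * n) (x n)
  have h2 := cartan_i hD hb (2 * n + 1) (x (n + 1))
  cases n with
  | zero =>
    change b 1 (iop D 2 (x 1) + Sop D 1 (x 0)) + B 0 (iop D 0 (x 0)) +
      (iop D 1 (b 2 (x 1) + B 1 (x 0)) + Sop D 0 (b 0 (x 0))) = Lop D 1 (x 0)
    rw [map_add, map_add]
    exact comb2 h1 h2
  | succ m =>
    change b (2 * m + 3) (iop D (2 * m + 4) (x (m + 2)) + Sop D (2 * m + 3) (x (m + 1))) +
      B (2 * m + 2) (iop D (2 * m + 2) (x (m + 1)) + Sop D (2 * m + 1) (x m)) +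
      (iop D (2 * m + 3) (b (2 * m + 4) (x (m + 2)) + B (2 * m + 3) (x (m + 1))) +
      Sop D (2 * m + 2) (b (2 * m + 2) (x (m + 1)) + B (2 * m + 1) (x m))) =
      Lop D (2 * m + 2 + 1) (x (m + 1))
    have h3 := cartanSB hD hB (2 * m + 1) (x m)
    have h4 := cartanBS hD hB (2 * m + 1) (x m)
    rw [map_add, map_add, map_add, map_add]
    exact comb4 h1 h2 h3 h4

variable {A' : Type*} [Ring A'] [Algebra k A']
  {b' : ∀ n : ℕ, CycChain k A' (n + 1) →ₗ[k] CycChain k A' n}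
  {B' : ∀ n : ℕ, CycChain k A' n →ₗ[k] CycChain k A' (n + 1)}

theorem map_dEO (F : ∀ n : ℕ, CycChain k A n →ₗ[k] CycChain k A' n)
    (h1 : ∀ n x, F n (b n x) = b' n (F (n + 1) x)) (h2 : ∀ n x, F (n + 1) (B n x) = B' n (F n x))
    (x : ∀ n : ℕ, CycChain k A (2 * n)) (n : ℕ) :
    dEO b' B' (fun n => F (2 * n) (x n)) n = F (2 * n + 1) (dEO b B x n) := by
  unfold dEO
  rw [map_add, h1, h2]
  rfl

theorem map_dOE (F : ∀ n : ℕ, CycChain k A n →ₗ[k] CycChain k A' n)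
    (h1 : ∀ n x, F n (b n x) = b' n (F (n + 1) x)) (h2 : ∀ n x, F (n + 1) (B n x) = B' n (F n x))
    (x : ∀ n : ℕ, CycChain k A (2 * n + 1)) (n : ℕ) :
    dOE b' B' (fun n => F (2 * n + 1) (x n)) n = F (2 * n) (dOE b B x n) := by
  cases n with
  | zero => exact (h1 0 _).symm
  | succ m =>
    change b' (2 * m + 2) (F (2 * m + 3) (x (m + 1))) + B' (2 * m + 1) (F (2 * m + 1) (x m)) =
      F (2 * m + 2) (b (2 * m + 2) (x (m + 1)) + B (2 * m + 1) (x m))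
    rw [map_add, h1, h2]

theorem dOE_neg (y : ∀ n : ℕ, CycChain k A (2 * n + 1)) (n : ℕ) :
    dOE b B (fun n => - y n) n = - dOE b B y n := by
  cases n with
  | zero => exact map_neg _ _
  | succ m =>
    change b (2 * m + 2) (- y (m + 1)) + B (2 * m + 1) (- y m) =
      - (b (2 * m + 2) (y (m + 1)) + B (2 * m + 1) (y m))
    rw [map_neg, map_neg, neg_add]

theorem dEO_neg (y : ∀ n : ℕ, CycChain k A (2 * n)) (n : ℕ) :
    dEO b B (fun n => - y n) n = - dEO b B y n := by
  unfold dEO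
  rw [map_neg, map_neg, neg_add]

theorem dEO_zero (y : ∀ n : ℕ, CycChain k A (2 * n)) (h : ∀ n, y n = 0) (n : ℕ) :
    dEO b B y n = 0 := by
  unfold dEO
  rw [h, h, map_zero, map_zero, add_zero]

theorem dOE_zero (y : ∀ n : ℕ, CycChain k A (2 * n + 1)) (h : ∀ n, y n = 0) (n : ℕ) :
    dOE b B y n = 0 := by
  obtain rfl : y = fun _ => 0 := funext h
  cases n with
  | zero => exact map_zero _
  | succ m =>
    change b (2 * m + 2) 0 + B (2 * m + 1) 0 = 0
    rw [map_zero, map_zero, add_zero]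

end cx
end homotopy
end HPG

/-- Let `A = ⊕_{n≥0} A_n` be a nonnegatively graded algebra over a field of
characteristic `0`, `A₀` its degree-zero part.  Then the inclusion `A₀ → A` induces an
isomorphism `HP_•(A₀) ≅ HP_•(A)` on periodic cyclic homology.  Here the periodic cyclic
complexes are the `ℤ/2`-graded complexes `(Π_n C_{2n}, Π_n C_{2n+1}, b + B)`, where the `b`
and `B` operators (hypothesized as linear maps, and uniquely determined by their standard
values on elementary tensors) and the chain map `ι` induced by the inclusion are given;
the conclusion asserts bijectivity of `ι` on even and odd homology. -/
theorem stmt13 {k A : Type*} [Field k] [CharZero k] [Ring A] [Algebra k A]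
    (𝒜 : ℕ → Submodule k A) [GradedAlgebra 𝒜]
    -- the operators b, B of the cyclic complex of A
    (bA : ∀ n : ℕ, CycChain k A (n + 1) →ₗ[k] CycChain k A n)
    (BA : ∀ n : ℕ, CycChain k A n →ₗ[k] CycChain k A (n + 1))
    (hbA : ∀ (n : ℕ) (a₀ : Unitization k A) (f : ℕ → A),
      bA n (elemC k A (n + 1) a₀ f) = bElemF k A n a₀ f)
    (hBA : ∀ (n : ℕ) (a₀ : Unitization k A) (f : ℕ → A),
      BA n (elemC k A n a₀ f) = BElemF k A n a₀ f)
    -- the operators b, B of the cyclic complex of A₀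
    (b0 : ∀ n : ℕ, CycChain k (degZeroSubalgebra 𝒜) (n + 1) →ₗ[k]
      CycChain k (degZeroSubalgebra 𝒜) n)
    (B0 : ∀ n : ℕ, CycChain k (degZeroSubalgebra 𝒜) n →ₗ[k]
      CycChain k (degZeroSubalgebra 𝒜) (n + 1))
    (hb0 : ∀ (n : ℕ) (a₀ : Unitization k (degZeroSubalgebra 𝒜))
        (f : ℕ → (degZeroSubalgebra 𝒜)),
      b0 n (elemC k (degZeroSubalgebra 𝒜) (n + 1) a₀ f)
        = bElemF k (degZeroSubalgebra 𝒜) n a₀ f)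
    (hB0 : ∀ (n : ℕ) (a₀ : Unitization k (degZeroSubalgebra 𝒜))
        (f : ℕ → (degZeroSubalgebra 𝒜)),
      B0 n (elemC k (degZeroSubalgebra 𝒜) n a₀ f)
        = BElemF k (degZeroSubalgebra 𝒜) n a₀ f)
    -- the chain map induced by the inclusion A₀ → A
    (ι : ∀ n : ℕ, CycChain k (degZeroSubalgebra 𝒜) n →ₗ[k] CycChain k A n)
    (hι : ∀ (n : ℕ) (a₀ : Unitization k (degZeroSubalgebra 𝒜))
        (f : ℕ → (degZeroSubalgebra 𝒜)),
      ι n (elemC k (degZeroSubalgebra 𝒜) n a₀ f)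
        = elemC k A n (unitizationIncl (degZeroSubalgebra 𝒜) a₀) (fun i => (f i : A))) :
    -- even surjectivity
    (∀ x : ∀ n : ℕ, CycChain k A (2 * n), (∀ n, dEO bA BA x n = 0) →
      ∃ w : ∀ n : ℕ, CycChain k (degZeroSubalgebra 𝒜) (2 * n),
        (∀ n, dEO b0 B0 w n = 0) ∧
        ∃ y : ∀ n : ℕ, CycChain k A (2 * n + 1),
          ∀ n, ι (2 * n) (w n) - x n = dOE bA BA y n) ∧
    -- even injectivity
    (∀ w : ∀ n : ℕ, CycChain k (degZeroSubalgebra 𝒜) (2 * n), (∀ n, dEO b0 B0 w n = 0) →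
      (∃ y : ∀ n : ℕ, CycChain k A (2 * n + 1), ∀ n, ι (2 * n) (w n) = dOE bA BA y n) →
      ∃ z : ∀ n : ℕ, CycChain k (degZeroSubalgebra 𝒜) (2 * n + 1),
        ∀ n, w n = dOE b0 B0 z n) ∧
    -- odd surjectivity
    (∀ x : ∀ n : ℕ, CycChain k A (2 * n + 1), (∀ n, dOE bA BA x n = 0) →
      ∃ w : ∀ n : ℕ, CycChain k (degZeroSubalgebra 𝒜) (2 * n + 1),
        (∀ n, dOE b0 B0 w n = 0) ∧
        ∃ y : ∀ n : ℕ, CycChain k A (2 * n),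
          ∀ n, ι (2 * n + 1) (w n) - x n = dEO bA BA y n) ∧
    -- odd injectivity
    (∀ w : ∀ n : ℕ, CycChain k (degZeroSubalgebra 𝒜) (2 * n + 1),
      (∀ n, dOE b0 B0 w n = 0) →
      (∃ y : ∀ n : ℕ, CycChain k A (2 * n), ∀ n, ι (2 * n + 1) (w n) = dEO bA BA y n) →
      ∃ z : ∀ n : ℕ, CycChain k (degZeroSubalgebra 𝒜) (2 * n),
        ∀ n, w n = dEO b0 B0 z n) := by
  classical
  obtain ⟨D, hD⟩ := HPG.exists_D (k := k) 𝒜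
  obtain ⟨G, hGX, hGY⟩ := HPG.exists_G' hD
  have hGb := HPG.G_b hbA hGX hGY
  have hGB := HPG.G_B hBA hGX hGY
  have hι' : ∀ n w, ι n w = HPG.Fm (degZeroSubalgebra 𝒜).val n w := by
    intro n w
    suffices h : ι n = HPG.Fm (degZeroSubalgebra 𝒜).val n from LinearMap.congr_fun h w
    refine HPG.ext_elem fun a f => ?_
    rw [hι, HPG.Fm_elem]
    rfl
  have hρb := HPG.Fm_b (HPG.pr 𝒜) hbA hb0
  have hρB := HPG.Fm_B (HPG.pr 𝒜) hBA hB0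
  have hLG := HPG.LG 𝒜 hD hGX hGY
  refine ⟨fun x hx => ?_, fun w _ hw => ?_, fun x hx => ?_, fun w _ hw => ?_⟩
  · refine ⟨fun n => HPG.Fm (HPG.pr 𝒜) (2 * n) (x n), fun n => ?_,
      fun n => - dEO (HPG.iop D) (HPG.Sop D) (fun n => G (2 * n) (x n)) n, fun n => ?_⟩
    · rw [HPG.map_dEO _ hρb hρB, hx, map_zero]
    · have h := HPG.cartan_even hD hbA hBA (fun n => G (2 * n) (x n)) n
      rw [HPG.dOE_zero (dEO bA BA _) (fun n => by
        rw [HPG.map_dEO G hGb hGB, hx, map_zero]), add_zero, hLG] at h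
      rw [HPG.dOE_neg, h, hι', neg_sub]
  · obtain ⟨y, hy⟩ := hw
    refine ⟨fun n => HPG.Fm (HPG.pr 𝒜) (2 * n + 1) (y n), fun n => ?_⟩
    rw [HPG.map_dOE _ hρb hρB, ← hy, hι', HPG.Fm_pr_val]
  · refine ⟨fun n => HPG.Fm (HPG.pr 𝒜) (2 * n + 1) (x n), fun n => ?_,
      fun n => - dOE (HPG.iop D) (HPG.Sop D) (fun n => G (2 * n + 1) (x n)) n, fun n => ?_⟩
    · rw [HPG.map_dOE _ hρb hρB, hx, map_zero]
    · have h := HPG.cartan_odd hD hbA hBA (fun n => G (2 * n + 1) (x n)) n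
      rw [HPG.dEO_zero (dOE bA BA _) (fun n => by
        rw [HPG.map_dOE G hGb hGB, hx, map_zero]), add_zero, hLG] at h
      rw [HPG.dEO_neg, h, hι', neg_sub]
  · obtain ⟨y, hy⟩ := hw
    refine ⟨fun n => HPG.Fm (HPG.pr 𝒜) (2 * n) (y n), fun n => ?_⟩
    rw [HPG.map_dEO _ hρb hρB, ← hy, hι', HPG.Fm_pr_val]
end

section
/- Let A be a Banach algebra whose Hochschild cochain complex C^•(A,A) admits a continuous linear contracting homotopy h in degree 2 (δh + hδ = 1 on C²(A,A)). Then A is smoothly rigid: every smooth one-parameter deformation {A_t}_{t∈J} of Banach algebra structures on the underlying Banach space of A with A₀ = A is trivial on some subinterval J' ∋ 0, i.e. there are algebra isomorphisms A_t ≅ A depending smoothly on t ∈ J'. -/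
open Set

section Aux

set_option synthInstance.maxHeartbeats 400000
set_option maxSynthPendingDepth 6
set_option maxHeartbeats 1000000

namespace HochRigid

section Cob
variable (A : Type*) [NormedAddCommGroup A] [NormedSpace ℝ A]


/-- post-composition `u, Φ ↦ ((a,b) ↦ u (Φ a b))`. -/
noncomputable def post : (A →L[ℝ] A) →L[ℝ] (A →L[ℝ] A →L[ℝ] A) →L[ℝ] (A →L[ℝ] A →L[ℝ] A) :=
  (ContinuousLinearMap.compL ℝ A (A →L[ℝ] A) (A →L[ℝ] A)) ∘L (ContinuousLinearMap.compL ℝ A A A)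

/-- `ξ, m ↦ ((a,b) ↦ m a (ξ b))`. -/
noncomputable def pre : (A →L[ℝ] A) →L[ℝ] (A →L[ℝ] A →L[ℝ] A) →L[ℝ] (A →L[ℝ] A →L[ℝ] A) :=
  (ContinuousLinearMap.compL ℝ A (A →L[ℝ] A) (A →L[ℝ] A)) ∘L (ContinuousLinearMap.compL ℝ A A A).flip

/-- the coboundary `C¹ → C²` of the multiplication `m`, linear in `m`. -/
noncomputable def d1 : (A →L[ℝ] A →L[ℝ] A) →L[ℝ] (A →L[ℝ] A) →L[ℝ] (A →L[ℝ] A →L[ℝ] A) :=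
  (pre A).flip - (post A).flip + ContinuousLinearMap.compL ℝ A A (A →L[ℝ] A)

/-- `Φ, m ↦ ((a,b,c) ↦ m a (Φ b c))`. -/
noncomputable def outer : (A →L[ℝ] A →L[ℝ] A) →L[ℝ] (A →L[ℝ] A →L[ℝ] A) →L[ℝ] (A →L[ℝ] A →L[ℝ] A →L[ℝ] A) :=
  (ContinuousLinearMap.compL ℝ A (A →L[ℝ] A) (A →L[ℝ] A →L[ℝ] A)) ∘L (post A).flip

/-- `Φ, m ↦ ((a,b,c) ↦ Φ (m a b) c)`. -/
noncomputable def innerComp : (A →L[ℝ] A →L[ℝ] A) →L[ℝ] (A →L[ℝ] A →L[ℝ] A) →L[ℝ] (A →L[ℝ] A →L[ℝ] A →L[ℝ] A) :=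
  (ContinuousLinearMap.compL ℝ A (A →L[ℝ] A) (A →L[ℝ] A →L[ℝ] A)) ∘L (ContinuousLinearMap.compL ℝ A A (A →L[ℝ] A))

/-- the coboundary `C² → C³` of the multiplication `m`, linear in `m`. -/
noncomputable def d2 : (A →L[ℝ] A →L[ℝ] A) →L[ℝ] (A →L[ℝ] A →L[ℝ] A) →L[ℝ] (A →L[ℝ] A →L[ℝ] A →L[ℝ] A) :=
  (outer A).flip - (innerComp A).flip + outer A - innerComp A

variable {A}

theorem d1_apply (m : (A →L[ℝ] A →L[ℝ] A)) (ξ : (A →L[ℝ] A)) (a b : A) :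
    d1 A m ξ a b = m a (ξ b) - ξ (m a b) + m (ξ a) b := by
  simp [d1, pre, post]

theorem d2_apply (m Φ : (A →L[ℝ] A →L[ℝ] A)) (a b c : A) :
    d2 A m Φ a b c = m a (Φ b c) - Φ (m a b) c + Φ a (m b c) - m (Φ a b) c := by
  simp [d2, outer, innerComp, post]

theorem d2_d1 (m : (A →L[ℝ] A →L[ℝ] A)) (hm : ∀ a b c : A, m (m a b) c = m a (m b c)) (ξ : (A →L[ℝ] A)) :
    d2 A m (d1 A m ξ) = 0 := by
  ext a b c
  simp only [d2_apply, d1_apply, map_add, map_sub, _root_.add_apply,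
    _root_.sub_apply, _root_.zero_apply, hm]
  abel

end Cob

theorem inverse_mem {E : Type*} [NormedAddCommGroup E] [NormedSpace ℝ E] [CompleteSpace E]
    (P : E →L[ℝ] E) (hP : ‖1 - P‖ < 1) (Z : Submodule ℝ E) (hZ : IsClosed (Z : Set E))
    (hPZ : ∀ z ∈ Z, P z ∈ Z) (z : E) (hz : z ∈ Z) : (Ring.inverse P) z ∈ Z := by
  have h := hasSum_geom_series_inverse (1 - P) hP
  rw [sub_sub_cancel] at h
  have h' := (ContinuousLinearMap.apply ℝ E z).hasSum h
  have hn : ∀ n : ℕ, ((1 - P) ^ n) z ∈ Z := by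
    intro n
    induction n with
    | zero => simpa using hz
    | succ n ih =>
      rw [pow_succ']
      exact Z.sub_mem ih (hPZ _ ih)
  refine hZ.mem_of_tendsto h' (Filter.Eventually.of_forall fun s => ?_)
  exact Z.sum_mem fun i _ => hn i

theorem lin_ode {R : Type*} [NormedRing R] [NormedAlgebra ℝ R] [CompleteSpace R]
    (X : ℝ → R) (hX : ContDiffAt ℝ 1 X 0) :
    ∃ ε > 0, ∃ G : ℝ → R, G 0 = 1 ∧ ∀ t ∈ Ioo (-ε) ε, HasDerivAt G (X t * G t) t := by
  let v : ℝ × R → ℝ × R := fun p => (1, X p.1 * p.2)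
  have hv : ContDiffAt ℝ 1 v ((0 : ℝ), (1 : R)) := by
    refine contDiffAt_const.prodMk (ContDiffAt.mul ?_ contDiffAt_snd)
    exact ContDiffAt.comp ((0 : ℝ), (1 : R)) (g := X) hX contDiffAt_fst
  obtain ⟨α, h0, ε, hε, hα⟩ :=
    hv.exists_forall_mem_closedBall_exists_eq_forall_mem_Ioo_hasDerivAt₀ 0
  rw [zero_sub, zero_add] at hα
  have h1 : ∀ t ∈ Ioo (-ε) ε, (α t).1 = t := by
    have hd : ∀ t ∈ Ioo (-ε) ε, HasDerivAt (fun t => (α t).1) 1 t := fun t ht =>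
      (hα t ht).fst
    have := ODE_solution_unique_of_mem_Ioo (v := fun _ _ => (1 : ℝ)) (s := fun _ => univ)
      (K := 0) (a := -ε) (b := ε) (t₀ := 0) (f := fun t => (α t).1) (g := fun t => t)
      (fun t _ => (LipschitzWith.const (1 : ℝ)).lipschitzOnWith) ⟨by linarith, hε⟩
      (fun t ht => ⟨hd t ht, trivial⟩) (fun t _ => ⟨hasDerivAt_id t, trivial⟩) (by simp [h0])
    exact this
  refine ⟨ε, hε, fun t => (α t).2, by simp [h0], fun t ht => ?_⟩
  have := (hα t ht).snd
  simp only [v, h1 t ht] at this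
  exact this

theorem ode_smooth {R : Type*} [NormedRing R] [NormedAlgebra ℝ R]
    (X G : ℝ → R) (s : Set ℝ) (hs : IsOpen s) (hX : ContDiffOn ℝ (⊤ : ℕ∞) X s)
    (hG : ∀ t ∈ s, HasDerivAt G (X t * G t) t) : ContDiffOn ℝ (⊤ : ℕ∞) G s := by
  rw [contDiffOn_infty]
  intro n
  induction n with
  | zero =>
    exact contDiffOn_zero.2 fun t ht => (hG t ht).continuousAt.continuousWithinAt
  | succ n ih =>
    push_cast
    rw [contDiffOn_succ_iff_deriv_of_isOpen hs]
    refine ⟨fun t ht => (hG t ht).differentiableAt.differentiableWithinAt, by simp, ?_⟩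
    refine ContDiffOn.congr (f := fun t => X t * G t) ?_ fun t ht => (hG t ht).deriv
    exact ((contDiffOn_infty.1 hX) n).mul ih

/-- uniqueness for a homogeneous linear equation with bounded coefficient -/
theorem ode_zero {E : Type*} [NormedAddCommGroup E] [NormedSpace ℝ E]
    (X : ℝ → E →L[ℝ] E) (D : ℝ → E) (ε : ℝ) (hε : 0 < ε) (K : ℝ)
    (hK : ∀ t ∈ Ioo (-ε) ε, ‖X t‖ ≤ K)
    (hD : ∀ t ∈ Ioo (-ε) ε, HasDerivAt D (X t (D t)) t) (h0 : D 0 = 0) :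
    ∀ t ∈ Ioo (-ε) ε, D t = 0 := by
  have := ODE_solution_unique_of_mem_Ioo (v := fun t x => X t x) (s := fun _ => univ)
      (K := K.toNNReal) (a := -ε) (b := ε) (t₀ := 0) (f := D) (g := fun _ => 0)
      (fun t ht => ((X t).lipschitz.weaken
        (by rw [← NNReal.coe_le_coe]; exact (hK t ht).trans (Real.le_coe_toNNReal K))).lipschitzOnWith)
      ⟨by linarith, hε⟩
      (fun t ht => ⟨hD t ht, trivial⟩) (fun t _ => ⟨by simpa using hasDerivAt_const t (0 : E), trivial⟩) h0
  exact this

theorem main {A : Type*} [NormedAddCommGroup A] [NormedSpace ℝ A] [CompleteSpace A]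
    -- the multiplication of the Banach algebra `A`
    (μ : A →L[ℝ] A →L[ℝ] A)
    (hμ_assoc : ∀ a b c : A, μ (μ a b) c = μ a (μ b c))
    -- the bundled Hochschild coboundary `δ : C²(A,A) → C³(A,A)`
    (hδ : (A →L[ℝ] A →L[ℝ] A) →L[ℝ] (A →L[ℝ] A →L[ℝ] A →L[ℝ] A))
    (hδ_apply : ∀ (Φ : A →L[ℝ] A →L[ℝ] A) (a b c : A),
      hδ Φ a b c = μ a (Φ b c) - Φ (μ a b) c + Φ a (μ b c) - μ (Φ a b) c)
    -- a continuous linear contracting homotopy in degree 2: `δ h₂ + h₃ δ = 1` on `C²`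
    (h₂ : (A →L[ℝ] A →L[ℝ] A) →L[ℝ] (A →L[ℝ] A))
    (h₃ : (A →L[ℝ] A →L[ℝ] A →L[ℝ] A) →L[ℝ] (A →L[ℝ] A →L[ℝ] A))
    (hcontract : ∀ (Φ : A →L[ℝ] A →L[ℝ] A) (a b : A),
      (μ a (h₂ Φ b) - h₂ Φ (μ a b) + μ (h₂ Φ a) b) + h₃ (hδ Φ) a b = Φ a b)
    -- a smooth deformation of associative multiplications with `m 0 = μ`
    (m : ℝ → A →L[ℝ] A →L[ℝ] A)
    (hm_smooth : ContDiff ℝ (⊤ : ℕ∞) m)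
    (hm_assoc : ∀ (t : ℝ) (a b c : A), m t (m t a b) c = m t a (m t b c))
    (hm_zero : m 0 = μ) :
    ∃ ε > 0, ∃ F : ℝ → A ≃L[ℝ] A,
      (∀ x : A, ContDiffOn ℝ (⊤ : ℕ∞) (fun t => F t x) (Ioo (-ε) ε)) ∧
      (∀ x : A, ContDiffOn ℝ (⊤ : ℕ∞) (fun t => (F t).symm x) (Ioo (-ε) ε)) ∧
      ∀ t ∈ Ioo (-ε) ε, ∀ a b : A, F t (m t a b) = μ (F t a) (F t b) := by
  classical
  have hmd : ∀ t, HasDerivAt m (deriv m t) t := fun t =>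
    (hm_smooth.differentiable (by simp)).differentiableAt.hasDerivAt
  have hm'_smooth : ContDiff ℝ (⊤ : ℕ∞) (deriv m) := by
    have := (contDiff_infty_iff_deriv (𝕜 := ℝ) (f := m)).1 hm_smooth
    exact this.2
  -- the derivative is a cocycle
  have hcoc : ∀ t, HochRigid.d2 A (m t) (deriv m t) = 0 := by
    intro t
    ext a b c
    have ha : ∀ (x : A), HasDerivAt (fun s => m s x) (deriv m t x) t := fun x => by
      simpa using (hmd t).clm_apply (hasDerivAt_const t x)
    have hab : ∀ (x y : A), HasDerivAt (fun s => m s x y) (deriv m t x y) t := fun x y => by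
      simpa using (ha x).clm_apply (hasDerivAt_const t y)
    have hL : HasDerivAt (fun s => m s (m s a b) c)
        (deriv m t (m t a b) c + m t (deriv m t a b) c) t := by
      simpa using ((hmd t).clm_apply (hab a b)).clm_apply (hasDerivAt_const t c)
    have hR : HasDerivAt (fun s => m s a (m s b c))
        (deriv m t a (m t b c) + m t a (deriv m t b c)) t := by
      simpa using (ha a).clm_apply (hab b c)
    have heq : (fun s => m s (m s a b) c) = fun s => m s a (m s b c) :=
      funext fun s => hm_assoc s a b c
    rw [heq] at hL
    have := hL.unique hR
    rw [HochRigid.d2_apply]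
    simp only [_root_.zero_apply]
    linear_combination (norm := module) (-1 : ℝ) • this
  let P : ℝ → (A →L[ℝ] A →L[ℝ] A) →L[ℝ] (A →L[ℝ] A →L[ℝ] A) := fun t =>
    (HochRigid.d1 A (m t)) ∘L h₂ + h₃ ∘L (HochRigid.d2 A (m t))
  have hP_smooth : ContDiff ℝ (⊤ : ℕ∞) P := by
    refine ContDiff.add ?_ ?_
    · exact ((HochRigid.d1 A).contDiff.comp hm_smooth).clm_comp contDiff_const
    · exact contDiff_const.clm_comp ((HochRigid.d2 A).contDiff.comp hm_smooth)
  have hd2 : HochRigid.d2 A μ = hδ := by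
    ext Φ a b c
    rw [HochRigid.d2_apply, hδ_apply]
  have hP0 : P 0 = 1 := by
    ext Φ a b
    have := hcontract Φ a b
    simp only [P, hm_zero, hd2, _root_.add_apply, ContinuousLinearMap.comp_apply,
      HochRigid.d1_apply]
    exact this
  let X : ℝ → A →L[ℝ] A := fun t => -(h₂ (Ring.inverse (P t) (deriv m t)))
  have hX_at : ∀ t, IsUnit (P t) → ContDiffAt ℝ (⊤ : ℕ∞) X t := by
    intro t ht
    obtain ⟨u, hu⟩ := ht
    have h1 : ContDiffAt ℝ (⊤ : ℕ∞) (fun s => Ring.inverse (P s)) t := by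
      refine ContDiffAt.comp t (g := Ring.inverse) ?_ hP_smooth.contDiffAt
      rw [← hu]
      exact contDiffAt_ringInverse ℝ u
    exact (h₂.contDiff.contDiffAt.comp t (h1.clm_apply hm'_smooth.contDiffAt)).neg
  have hPnear : ∀ᶠ t in nhds (0 : ℝ), ‖1 - P t‖ < 1 := by
    have hc : Continuous fun t => ‖1 - P t‖ := (continuous_const.sub hP_smooth.continuous).norm
    refine hc.continuousAt.eventually_lt continuousAt_const ?_
    simp [hP0]
  have hunit : ∀ t, ‖1 - P t‖ < 1 → IsUnit (P t) := fun t ht => by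
    have := isUnit_one_sub_of_norm_lt_one ht
    rwa [sub_sub_cancel] at this
  have hcob : ∀ t, ‖1 - P t‖ < 1 → HochRigid.d1 A (m t) (X t) = - deriv m t := by
    intro t ht
    have hz := HochRigid.inverse_mem (P t) ht
      (LinearMap.ker (HochRigid.d2 A (m t)).toLinearMap)
      (HochRigid.d2 A (m t)).isClosed_ker
      (fun z hz => by
        have hz' : HochRigid.d2 A (m t) z = 0 := hz
        change HochRigid.d2 A (m t) (P t z) = 0
        simp only [P, _root_.add_apply, ContinuousLinearMap.comp_apply, hz', map_zero,
          add_zero]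
        exact HochRigid.d2_d1 _ (hm_assoc t) _) (deriv m t) (hcoc t)
    have hz' : HochRigid.d2 A (m t) (Ring.inverse (P t) (deriv m t)) = 0 := hz
    have h1 : P t (Ring.inverse (P t) (deriv m t)) = deriv m t := by
      have := Ring.mul_inverse_cancel _ (hunit t ht)
      exact congrArg (fun T => T (deriv m t)) this
    simp only [P, _root_.add_apply, ContinuousLinearMap.comp_apply] at h1
    change HochRigid.d1 A (m t) (-(h₂ (Ring.inverse (P t) (deriv m t)))) = _
    rw [map_neg]
    rw [hz', map_zero, add_zero] at h1
    rw [h1]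
  have hX0 := hX_at 0 (by rw [hP0]; exact isUnit_one)
  obtain ⟨ε₁, hε₁, G, hG0, hG⟩ := HochRigid.lin_ode X (hX0.of_le (by simp))
  have hXb : ∀ᶠ t in nhds (0 : ℝ), ‖X t‖ < ‖X 0‖ + 1 :=
    hX0.continuousAt.norm.eventually_lt continuousAt_const (by simp)
  have hGc : ContinuousAt G 0 := (hG 0 ⟨by linarith, hε₁⟩).continuousAt
  have hGu : ∀ᶠ t in nhds (0 : ℝ), IsUnit (G t) := by
    refine hGc.eventually (Units.isOpen.mem_nhds ?_)
    rw [hG0]; exact isUnit_one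
  obtain ⟨ε₂, hε₂, hall⟩ := Metric.eventually_nhds_iff.1 (hPnear.and (hXb.and hGu))
  let ε := min ε₁ ε₂
  have hε : 0 < ε := lt_min hε₁ hε₂
  have hall' : ∀ t ∈ Ioo (-ε) ε, ‖1 - P t‖ < 1 ∧ ‖X t‖ < ‖X 0‖ + 1 ∧ IsUnit (G t) := by
    intro t ht
    apply hall
    rw [Real.dist_eq, sub_zero]
    exact (abs_lt.2 ht).trans_le (min_le_right _ _)
  have hG' : ∀ t ∈ Ioo (-ε) ε, HasDerivAt G (X t * G t) t := fun t ht =>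
    hG t ⟨by linarith [ht.1, min_le_left ε₁ ε₂], by linarith [ht.2, min_le_left ε₁ ε₂]⟩
  have hGs : ContDiffOn ℝ (⊤ : ℕ∞) G (Ioo (-ε) ε) :=
    HochRigid.ode_smooth X G _ isOpen_Ioo
      (fun t ht => (hX_at t (hunit t (hall' t ht).1)).contDiffWithinAt) hG'
  have hGi : ContDiffOn ℝ (⊤ : ℕ∞) (fun t => Ring.inverse (G t)) (Ioo (-ε) ε) := by
    intro t ht
    obtain ⟨u, hu⟩ := (hall' t ht).2.2
    refine ContDiffAt.comp_contDiffWithinAt t (g := Ring.inverse) ?_ (hGs t ht)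
    rw [← hu]
    exact contDiffAt_ringInverse ℝ u
  have hhom : ∀ t ∈ Ioo (-ε) ε, ∀ a b : A, m t (G t a) (G t b) = G t (μ a b) := by
    intro t ht a b
    rw [← sub_eq_zero]
    refine HochRigid.ode_zero X (fun t => m t (G t a) (G t b) - G t (μ a b)) ε hε (‖X 0‖ + 1)
      (fun t ht => (hall' t ht).2.1.le) ?_ (by simp [hG0, hm_zero]) t ht
    intro t ht
    have hGx : ∀ x : A, HasDerivAt (fun s => G s x) (X t (G t x)) t := fun x => by
      simpa using (hG' t ht).clm_apply (hasDerivAt_const t x)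
    have hD := (((hmd t).clm_apply (hGx a)).clm_apply (hGx b)).sub (hGx (μ a b))
    have hc := congrArg (fun T => T (G t a) (G t b)) (hcob t (hall' t ht).1)
    simp only [HochRigid.d1_apply, _root_.neg_apply] at hc
    refine hD.congr_deriv ?_
    simp only [_root_.add_apply, map_sub]
    linear_combination (norm := module) (1 : ℝ) • hc
  refine ⟨ε, hε, fun t => if h : IsUnit (G t) then
    (ContinuousLinearEquiv.unitsEquiv ℝ A h.unit).symm else ContinuousLinearEquiv.refl ℝ A,
    ?_, ?_, ?_⟩
  · intro x
    refine (hGi.clm_apply contDiffOn_const).congr (f := fun t => Ring.inverse (G t) x) ?_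
    intro t ht
    have hu := (hall' t ht).2.2
    simp only [dif_pos hu]
    rw [ContinuousLinearEquiv.symm_apply_eq, ContinuousLinearEquiv.unitsEquiv_apply]
    exact (congrArg (fun T => T x) (Ring.mul_inverse_cancel _ hu)).symm
  · intro x
    refine (hGs.clm_apply contDiffOn_const).congr (f := fun t => G t x) ?_
    intro t ht
    have hu := (hall' t ht).2.2
    simp only [dif_pos hu]
    rfl
  · intro t ht a b
    have hu := (hall' t ht).2.2
    simp only [dif_pos hu]
    rw [ContinuousLinearEquiv.symm_apply_eq, ContinuousLinearEquiv.unitsEquiv_apply]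
    have hGF : ∀ x, G t ((ContinuousLinearEquiv.unitsEquiv ℝ A hu.unit).symm x) = x := fun x =>
      (ContinuousLinearEquiv.unitsEquiv ℝ A hu.unit).apply_symm_apply x
    have := hhom t ht ((ContinuousLinearEquiv.unitsEquiv ℝ A hu.unit).symm a)
      ((ContinuousLinearEquiv.unitsEquiv ℝ A hu.unit).symm b)
    rw [hGF, hGF] at this
    exact this

end HochRigid

end Aux

/-- Let `A` be a Banach algebra (a Banach space with a continuous associative
multiplication `μ`) whose Hochschild cochain complex admits a continuous linear contracting
homotopy in degree `2`: `δh₂ + h₃δ = 1` on `C²(A,A)` (where `hδ` is the bundled Hochschild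
coboundary `C² → C³`, characterized by the usual pointwise formula).  Then `A` is smoothly
rigid: every smooth deformation `{m_t}` of continuous associative multiplications with
`m 0 = μ` is trivial on a subinterval `(−ε, ε) ∋ 0`, i.e. there are continuous linear
algebra isomorphisms `F_t : A_t ≅ A` depending smoothly on `t`. -/
theorem stmt15 {A : Type*} [NormedAddCommGroup A] [NormedSpace ℝ A] [CompleteSpace A]
    -- the multiplication of the Banach algebra `A`
    (μ : A →L[ℝ] A →L[ℝ] A)
    (hμ_assoc : ∀ a b c : A, μ (μ a b) c = μ a (μ b c))
    -- the bundled Hochschild coboundary `δ : C²(A,A) → C³(A,A)`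
    (hδ : (A →L[ℝ] A →L[ℝ] A) →L[ℝ] (A →L[ℝ] A →L[ℝ] A →L[ℝ] A))
    (hδ_apply : ∀ (Φ : A →L[ℝ] A →L[ℝ] A) (a b c : A),
      hδ Φ a b c = μ a (Φ b c) - Φ (μ a b) c + Φ a (μ b c) - μ (Φ a b) c)
    -- a continuous linear contracting homotopy in degree 2: `δ h₂ + h₃ δ = 1` on `C²`
    (h₂ : (A →L[ℝ] A →L[ℝ] A) →L[ℝ] (A →L[ℝ] A))
    (h₃ : (A →L[ℝ] A →L[ℝ] A →L[ℝ] A) →L[ℝ] (A →L[ℝ] A →L[ℝ] A))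
    (hcontract : ∀ (Φ : A →L[ℝ] A →L[ℝ] A) (a b : A),
      (μ a (h₂ Φ b) - h₂ Φ (μ a b) + μ (h₂ Φ a) b) + h₃ (hδ Φ) a b = Φ a b)
    -- a smooth deformation of associative multiplications with `m 0 = μ`
    (m : ℝ → A →L[ℝ] A →L[ℝ] A)
    (hm_smooth : ContDiff ℝ (⊤ : ℕ∞) m)
    (hm_assoc : ∀ (t : ℝ) (a b c : A), m t (m t a b) c = m t a (m t b c))
    (hm_zero : m 0 = μ) :
    ∃ ε > 0, ∃ F : ℝ → A ≃L[ℝ] A,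
      (∀ x : A, ContDiffOn ℝ (⊤ : ℕ∞) (fun t => F t x) (Ioo (-ε) ε)) ∧
      (∀ x : A, ContDiffOn ℝ (⊤ : ℕ∞) (fun t => (F t).symm x) (Ioo (-ε) ε)) ∧
      ∀ t ∈ Ioo (-ε) ε, ∀ a b : A, F t (m t a b) = μ (F t a) (F t b) := by
  exact HochRigid.main μ hμ_assoc hδ hδ_apply h₂ h₃ hcontract m hm_smooth hm_assoc hm_zero
end
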